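/- Let p be a prime with p ≡ 1 (mod 8) and k* = ℚ(√2, √p, i). Then the 2-rank of Cl(k*), i.e. dim_{𝔽₂}(Cl(k*)/Cl(k*)²), equals 2 or 3; and it equals 3 if and only if (2/p)₄ = (p/2)₄ = 1. -/

import Mathlib

/-!
Write `R = ℤ[ζ₈]`, a principal ideal domain, and let `S` be the ring of integers of
`k* = ℚ(ζ₈, √p)`, with `τ` the nontrivial automorphism of `S` over `R` and `N` the relative norm.
As `p ≡ 1 (mod 8)`, the prime `p` splits into four primes of `R`; these ramify in `S`, and no other
prime does. The quotient `Cl(S)/Cl(S)²` is as large as the two-torsion of `Cl(S)`. It is bounded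
from above as two-torsion and from below as a quotient.

*Upper bound.* If `I² = (a)`, then `τ I = β I` with `β = x / a`, where `(x) = I * τ I` with `x ∈ R`,
and `N β` is a unit `u` of `R` (`QuadSetup.exists_Tw`). When `u` is the norm of a unit, Hilbert 90
makes `I` equivalent to an invariant ideal, hence to a product of ramified primes
(`QuadSetup.Tw.exists_inv`, `QuadSetup.Ram.ambig`). The relations between the classes of ramified
primes come from units of norm one modulo those of the form `η / τ η`, and these are counted by the
Herbrand quotient of the units (`QuadSetup.unit_index`). Together this gives
`|Cl(S)[2]| * [Rˣ : M] ≤ 8` for every group `M` of units containing all the `u` that occur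
(`QuadSetup.Ram.card_le`). The choice `M = Rˣ` bounds the order by `8`. Since `u` is a norm from
`k*`, it is a square modulo every ramified prime (`QuadSetup.isSquare_of_nm`), so `M` may also be
taken to be the group of units that are squares modulo one prime above `p`. The units of `R` are
generated by `ζ₈` and `1 + √2` modulo squares (`exists_unit_form`), so the bound improves to `4`
unless these two are squares modulo `p`.

*Lower bound.* Classes of ideals of `S` are separated modulo squares by their relative norms in
`R`, taken modulo units and norms from `k*` (`QuadSetup.two_pow_le_card`). There are primes
`q₁ ≡ 5` and `q₂ ≡ 3 (mod 8)`, both nonresidues modulo `p`, and factors `x₁ = a₁ + b₁ i` of `q₁` and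
`x₂ = a₂ + b₂ √-2` of `q₂`. The elements `x₁`, `x₂` and `q₂` all generate relative norms of ideals.
The residue characters modulo the four primes above `p` show that `x₁` and `x₂` are
independent, and that `x₁`, `x₂`, `q₂` are independent if all units of `R` are squares modulo `p`.

Thus the order is `8` if `ζ₈` and `1 + √2` are squares modulo `p`, and `4` otherwise
(`card_class_mod_sq`). By `biquadratic_iff` this condition is `(2/p)₄ = (p/2)₄ = 1`.
-/

/- STATEMENT 16: Let p ≡ 1 (mod 8) be prime and k* = ℚ(√2, √p, i). The 2-rank of Cl(k*)
equals 2 or 3 (i.e. the elementary abelian quotient Cl(k*)/Cl(k*)² has order 4 or 8),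
and it equals 3 iff (2/p)₄ = (p/2)₄ = 1. -/

open Complex NumberField IntermediateField nonZeroDivisors

noncomputable section

/-- k* = ℚ(√2, √p, i) as a subfield of ℂ. -/
def kstar (p : ℕ) : IntermediateField ℚ ℂ :=
  ℚ⟮(Real.sqrt 2 : ℂ), (Real.sqrt p : ℂ), (Complex.I : ℂ)⟯

/-- The quotient of the class group of k* by its subgroup of squares; its
𝔽₂-dimension is the 2-rank of Cl(k*). -/
def clModSq (p : ℕ) : Type _ :=
  ClassGroup (𝓞 (kstar p)) ⧸
    (powMonoidHom 2 : ClassGroup (𝓞 (kstar p)) →* ClassGroup (𝓞 (kstar p))).range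

set_option linter.unusedSectionVars false
set_option linter.overlappingInstances false

/-! ### Quadratic extensions of rings: conjugation, norm and ideals -/

/-- The integral data of a quadratic extension, with `R` and `S` playing the rôles of the rings of
integers of `ℚ(ζ₈)` and `k*`: an involution `τ` of `S` whose fixed ring is `R`, together with an
element `s` (namely `√p`) that generates the relative different, in the sense that `s = ω - τ ω`
(with `ω = (1 + √p)/2`). Primes of `S` that do not contain `s` are unramified. -/
structure QuadSetup (R S : Type*) [CommRing R] [CommRing S] [Algebra R S] where
  /-- The nontrivial automorphism of `S` over `R`. -/
  τ : S ≃ₐ[R] S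
  invol : ∀ y, τ (τ y) = y
  fixed : ∀ y, τ y = y → ∃ r, algebraMap R S r = y
  /-- The anti-invariant element `√p`. -/
  s : S
  /-- An element with `ω - τ ω = s`, namely `(1 + √p)/2`. -/
  ω : S
  τ_s : τ s = -s
  s_ne : s ≠ 0
  ω_sub : ω - τ ω = s

namespace QuadSetup

variable {R S : Type*} [CommRing R] [CommRing S] [IsDomain S] [Algebra R S] [FaithfulSMul R S]
  (D : QuadSetup R S)

theorem exists_nm (y : S) : ∃ r, algebraMap R S r = y * D.τ y :=
  D.fixed _ (by rw [map_mul, D.invol, mul_comm])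

/-- The relative norm `y ↦ y * τ y`, as an element of `R`. -/
noncomputable def nm : S →* R where
  toFun y := (D.exists_nm y).choose
  map_one' := by
    apply FaithfulSMul.algebraMap_injective R S
    rw [(D.exists_nm 1).choose_spec]; simp
  map_mul' x y := by
    apply FaithfulSMul.algebraMap_injective R S
    rw [map_mul (algebraMap R S), (D.exists_nm (x * y)).choose_spec, (D.exists_nm x).choose_spec,
      (D.exists_nm y).choose_spec, map_mul]
    ring

theorem nm_spec (y : S) : algebraMap R S (D.nm y) = y * D.τ y :=
  (D.exists_nm y).choose_spec

theorem exists_tr (y : S) : ∃ r, algebraMap R S r = y + D.τ y :=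
  D.fixed _ (by rw [map_add, D.invol, add_comm])

@[simp] theorem nm_algebraMap (r : R) : D.nm (algebraMap R S r) = r ^ 2 := by
  apply FaithfulSMul.algebraMap_injective R S
  rw [nm_spec]; simp [sq]

theorem nm_τ (y : S) : D.nm (D.τ y) = D.nm y := by
  apply FaithfulSMul.algebraMap_injective R S
  rw [nm_spec, nm_spec, D.invol, mul_comm]

theorem nm_ne_zero {y : S} (hy : y ≠ 0) : D.nm y ≠ 0 := by
  intro h
  have := D.nm_spec y
  rw [h, map_zero] at this
  rcases mul_eq_zero.1 this.symm with h | h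
  · exact hy h
  · exact hy (by simpa using h)

/-- The conjugate ideal `τ I`. -/
def cj (I : Ideal S) : Ideal S := I.map (D.τ : S →+* S)

theorem mem_cj {I : Ideal S} {y : S} : y ∈ D.cj I ↔ D.τ y ∈ I := by
  unfold cj
  constructor
  · intro h
    have := Ideal.mem_map_of_mem (D.τ : S →+* S) h
    rw [Ideal.map_map] at this
    have h2 : ((D.τ : S →+* S).comp (D.τ : S →+* S)) = RingHom.id S := by
      ext x; simp [D.invol]
    rw [h2, Ideal.map_id] at this
    simpa using this
  · intro h
    have := Ideal.mem_map_of_mem (D.τ : S →+* S) h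
    simpa [D.invol] using this

@[simp] theorem cj_cj (I : Ideal S) : D.cj (D.cj I) = I := by
  ext y; simp [mem_cj, D.invol]

theorem cj_mul (I J : Ideal S) : D.cj (I * J) = D.cj I * D.cj J := Ideal.map_mul _ _ _

@[simp] theorem cj_span (y : S) : D.cj (Ideal.span {y}) = Ideal.span {D.τ y} := by
  simp [cj, Ideal.map_span]

theorem cj_span_amap (r : R) : D.cj (Ideal.span {algebraMap R S r}) =
    Ideal.span {algebraMap R S r} := by simp

theorem cj_isPrime {I : Ideal S} (h : I.IsPrime) : (D.cj I).IsPrime := by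
  have : D.cj I = I.comap (D.τ : S →+* S) := by
    ext y; simp [mem_cj]
  rw [this]; exact Ideal.comap_isPrime _ _

@[simp] theorem cj_bot : D.cj (⊥ : Ideal S) = ⊥ := Ideal.map_bot

theorem cj_ne_bot {I : Ideal S} (h : I ≠ ⊥) : D.cj I ≠ ⊥ := by
  intro h2; apply h; rw [← D.cj_cj I, h2, cj_bot]

theorem cj_mono {I J : Ideal S} (h : I ≤ J) : D.cj I ≤ D.cj J := Ideal.map_mono h

/-- If `c / d` is a root of the monic polynomial `X ^ 2 - t X + n`, it lies in the integrally closed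
ring `S`. -/
theorem dvd_of_quadratic [IsIntegrallyClosed S] {c d t n : S} (hd : d ≠ 0)
    (h : c * c - d * t * c + d ^ 2 * n = 0) : d ∣ c := by
  have hdK : algebraMap S (FractionRing S) d ≠ 0 := by simpa using hd
  have hint : IsIntegral S (algebraMap S (FractionRing S) c / algebraMap S (FractionRing S) d) := by
    refine ⟨Polynomial.X ^ 2 - Polynomial.C t * Polynomial.X + Polynomial.C n, by monicity!, ?_⟩
    simp only [Polynomial.eval₂_add, Polynomial.eval₂_sub, Polynomial.eval₂_mul,
      Polynomial.eval₂_pow, Polynomial.eval₂_X, Polynomial.eval₂_C]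
    have := congrArg (algebraMap S (FractionRing S)) h
    simp only [map_add, map_sub, map_mul, map_pow, map_zero] at this
    field_simp
    linear_combination this
  obtain ⟨y, hy⟩ := IsIntegrallyClosed.isIntegral_iff.1 hint
  refine ⟨y, FaithfulSMul.algebraMap_injective S (FractionRing S) ?_⟩
  rw [map_mul (algebraMap S (FractionRing S)), hy]
  field_simp

/-- If `R` is a PID and `S` integrally closed, `I * τ I` is generated by an element of `R`. -/
theorem exists_norm [IsPrincipalIdealRing R] [IsIntegrallyClosed S] (I : Ideal S) :
    ∃ x : R, I * D.cj I = Ideal.span {algebraMap R S x} := by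
  -- the ideal of `R` lying below `I * τ I`
  let A : Ideal R := (I * D.cj I).comap (algebraMap R S)
  obtain ⟨d, hd⟩ := IsPrincipalIdealRing.principal A
  have hmem : ∀ r : R, algebraMap R S r ∈ I * D.cj I → ∃ c, r = d * c := by
    intro r hr
    have : r ∈ A := hr
    rw [hd] at this
    obtain ⟨c, hc⟩ := Ideal.mem_span_singleton'.1 this
    exact ⟨c, by rw [← hc, mul_comm]⟩
  refine ⟨d, le_antisymm ?_ ?_⟩
  · rw [Ideal.mul_le]
    intro a ha b hb
    rw [mem_cj] at hb
    obtain ⟨t, ht⟩ := D.exists_tr (a * b)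
    have hb' : b ∈ D.cj I := D.mem_cj.2 hb
    have ha' : D.τ a ∈ D.cj I := D.mem_cj.2 (by rwa [D.invol])
    obtain ⟨t', ht'⟩ := hmem t (by
      rw [ht, map_mul, mul_comm (D.τ a)]
      exact add_mem (Ideal.mul_mem_mul ha hb') (Ideal.mul_mem_mul hb ha'))
    obtain ⟨n₁, hn₁⟩ := hmem (D.nm a) (by rw [nm_spec]; exact Ideal.mul_mem_mul ha ha')
    obtain ⟨n₂, hn₂⟩ := hmem (D.nm b) (by
      rw [nm_spec, mul_comm b]; exact Ideal.mul_mem_mul hb hb')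
    rw [Ideal.mem_span_singleton]
    by_cases hd0 : algebraMap R S d = 0
    · have : algebraMap R S (D.nm (a * b)) = 0 := by rw [map_mul, hn₁, hn₂]; simp [hd0]
      have hab : a * b = 0 := by
        by_contra h
        exact D.nm_ne_zero h (FaithfulSMul.algebraMap_injective R S (by simpa using this))
      simp [hab]
    · -- `(a * b) / d` is a root of `X ^ 2 - t' X + n₁ n₂`
      have hq : (a * b) * (a * b) - algebraMap R S d * algebraMap R S t' * (a * b)
          + algebraMap R S d ^ 2 * (algebraMap R S n₁ * algebraMap R S n₂) = 0 := by
        have e1 : algebraMap R S d * algebraMap R S t' = a * b + D.τ (a * b) := by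
          rw [← ht, ht', map_mul]
        have e2 : algebraMap R S d ^ 2 * (algebraMap R S n₁ * algebraMap R S n₂) =
            (a * b) * D.τ (a * b) := by
          rw [← nm_spec, map_mul, hn₁, hn₂]; simp only [map_mul]; ring
        rw [e1, e2]; ring
      exact dvd_of_quadratic hd0 hq
  · rw [Ideal.span_singleton_le_iff_mem]
    have : d ∈ A := by rw [hd]; exact Ideal.mem_span_singleton_self d
    exact this

/-- If `p` is a square modulo `x`, with `x` prime to `2p`, then `(x)` is the relative norm of an
ideal, namely of `(x, √p - t)`. -/
theorem exists_of_sq_mod {p : R} (hs : D.s * D.s = algebraMap R S p) {x t : R}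
    (hx : IsCoprime x (2 * 2 * p)) (ht : x ∣ t * t - p) :
    ∃ I : Ideal S, I * D.cj I = Ideal.span {algebraMap R S x} := by
  obtain ⟨w, hw⟩ := ht
  obtain ⟨a, b, hab⟩ := hx
  set X := algebraMap R S x
  set T := algebraMap R S t
  have hw' : T * T - D.s * D.s = X * algebraMap R S w := by
    rw [hs, ← map_mul, ← map_mul, ← map_sub, hw]
  have hab' : algebraMap R S a * X + algebraMap R S b * (2 * 2 * (D.s * D.s)) = 1 := by
    rw [hs, ← map_one (algebraMap R S), ← hab]; simp [X, map_ofNat]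
  refine ⟨Ideal.span {X, D.s - T}, ?_⟩
  have hcj : D.cj (Ideal.span {X, D.s - T}) = Ideal.span {X, -D.s - T} := by
    simp [cj, Ideal.map_span, Set.image_pair, X, T, D.τ_s]
  rw [hcj, Ideal.span_pair_mul_span_pair]
  apply le_antisymm
  · rw [Ideal.span_le]
    rintro y (rfl | rfl | rfl | rfl) <;> simp only [SetLike.mem_coe, Ideal.mem_span_singleton]
    · exact ⟨X, rfl⟩
    · exact ⟨_, rfl⟩
    · exact ⟨_, mul_comm _ _⟩
    · exact ⟨algebraMap R S w, by rw [← hw']; ring⟩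
  · rw [Ideal.span_singleton_le_iff_mem]
    set J := Ideal.span {X * X, X * (-D.s - T), (D.s - T) * X, (D.s - T) * (-D.s - T)}
    have h1 : X * X ∈ J := Ideal.subset_span (by simp)
    have h2 : X * (-D.s - T) ∈ J := Ideal.subset_span (by simp)
    have h3 : (D.s - T) * X ∈ J := Ideal.subset_span (by simp)
    have : X = algebraMap R S a * (X * X) + algebraMap R S b * 2 * D.s *
        ((D.s - T) * X - X * (-D.s - T)) := by
      linear_combination (-X) * hab'
    rw [this]
    exact add_mem (Ideal.mul_mem_left _ _ h1) (Ideal.mul_mem_left _ _ (sub_mem h3 h2))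

/-- Extension of ideals from `R` to `S` is injective on principal ideals. -/
theorem exists_unit_of_span_eq (D : QuadSetup R S) {a b : R} (hb : b ≠ 0)
    (h : Ideal.span {algebraMap R S a} = Ideal.span {algebraMap R S b}) :
    ∃ u : Rˣ, a = u * b := by
  have : IsDomain R := (FaithfulSMul.algebraMap_injective R S).isDomain (algebraMap R S)
  have key : ∀ {a b : R}, algebraMap R S a ∣ algebraMap R S b → a ≠ 0 → a ∣ b := by
    rintro a b ⟨c, hc⟩ ha
    have ha' : algebraMap R S a ≠ 0 := by simpa using ha
    obtain ⟨r, hr⟩ := D.fixed c (by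
      have := congrArg D.τ hc
      simp only [map_mul, AlgEquiv.commutes] at this
      rw [hc] at this
      exact (mul_left_cancel₀ ha' this).symm)
    exact ⟨r, FaithfulSMul.algebraMap_injective R S (by rw [hc, map_mul, hr])⟩
  rw [Ideal.span_singleton_eq_span_singleton] at h
  have ha : a ≠ 0 := by
    rintro rfl
    rw [map_zero] at h
    exact hb (by simpa using h.symm)
  have : Associated b a := associated_of_dvd_dvd (key h.dvd' hb) (key h.dvd ha)
  obtain ⟨u, hu⟩ := this
  exact ⟨u, by rw [← hu, mul_comm]⟩

/-- A conjugation-invariant prime not containing `s` is extended from `R`: if `(q)` lies below `Q`,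
then `s z` is a combination of the traces of `z` and `ω z` for every `z ∈ Q`, so that
`s Q ⊆ q S`. -/
theorem prime_of_cj_eq [IsPrincipalIdealRing R] [IsDedekindDomain S] {Q : Ideal S} (hQ : Q.IsPrime)
    (hQ0 : Q ≠ ⊥) (hcj : D.cj Q = Q) (hs : D.s ∉ Q) :
    ∃ x : R, Q = Ideal.span {algebraMap R S x} := by
  obtain ⟨q, hq⟩ := IsPrincipalIdealRing.principal (Q.comap (algebraMap R S))
  have hmem : ∀ r : R, algebraMap R S r ∈ Q → ∃ c, r = q * c := by
    intro r hr
    have : r ∈ Q.comap (algebraMap R S) := hr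
    rw [hq] at this
    obtain ⟨c, hc⟩ := Ideal.mem_span_singleton'.1 this
    exact ⟨c, by rw [← hc, mul_comm]⟩
  have hqQ : algebraMap R S q ∈ Q := by
    have : q ∈ Q.comap (algebraMap R S) := by rw [hq]; exact Ideal.mem_span_singleton_self q
    exact this
  refine ⟨q, ?_⟩
  have hz : ∀ z ∈ Q, D.s * z ∈ Ideal.span {algebraMap R S q} := by
    intro z hz
    have hz' : D.τ z ∈ Q := by rwa [← mem_cj, hcj]
    obtain ⟨t₁, ht₁⟩ := D.exists_tr z
    obtain ⟨t₂, ht₂⟩ := D.exists_tr (D.ω * z)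
    obtain ⟨c₁, hc₁⟩ := hmem t₁ (by rw [ht₁]; exact add_mem hz hz')
    obtain ⟨c₂, hc₂⟩ := hmem t₂ (by
      rw [ht₂, map_mul]; exact add_mem (Q.mul_mem_left _ hz) (Q.mul_mem_left _ hz'))
    rw [Ideal.mem_span_singleton]
    refine ⟨algebraMap R S c₂ - D.τ D.ω * algebraMap R S c₁, ?_⟩
    have e1 : algebraMap R S q * algebraMap R S c₁ = z + D.τ z := by rw [← ht₁, hc₁, map_mul]
    have e2 : algebraMap R S q * algebraMap R S c₂ = D.ω * z + D.τ D.ω * D.τ z := by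
      rw [← map_mul D.τ, ← ht₂, hc₂, map_mul]
    rw [← D.ω_sub]
    linear_combination D.τ D.ω * e1 - e2
  have hmul : Ideal.span {D.s} * Q ≤ Ideal.span {algebraMap R S q} := by
    rw [Ideal.span_singleton_mul_le_iff]
    exact hz
  have hle : Ideal.span {algebraMap R S q} ≤ Q := by rwa [Ideal.span_singleton_le_iff_mem]
  obtain ⟨J, hJ⟩ := Ideal.dvd_iff_le.2 hle
  rw [hJ] at hmul
  have h1 : J ∣ Ideal.span {D.s} := by
    have := Ideal.dvd_iff_le.2 hmul
    rw [mul_comm Q J] at this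
    exact (mul_dvd_mul_iff_right hQ0).1 this
  obtain ⟨x, hx⟩ := D.exists_norm Q
  rw [hcj] at hx
  have h2 : J ∣ Q := by
    obtain ⟨c, hc⟩ := hmem x (Ideal.mul_le_right (I := Q) (by
      rw [hx]; exact Ideal.mem_span_singleton_self _))
    have : Q * J ∣ Q * Q := by
      rw [← hJ, hx, Ideal.dvd_iff_le, Ideal.span_singleton_le_span_singleton, hc, map_mul]
      exact dvd_mul_right _ _
    exact (mul_dvd_mul_iff_left hQ0).1 this
  have hQp : Prime Q := Ideal.prime_of_isPrime hQ0 hQ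
  rcases (hQp.irreducible.dvd_iff).1 h2 with h | h
  · rw [hJ, Ideal.isUnit_iff.1 h, Ideal.mul_top]
  · exfalso
    apply hs
    have := Ideal.dvd_iff_le.1 ((h.dvd).trans h1)
    rwa [Ideal.span_singleton_le_iff_mem] at this

/-! ### Ideal classes of order two and invariant ideals -/

/-- The class of an ideal, with junk value `1` at the zero ideal. -/
noncomputable def cls [IsDedekindDomain S] (I : Ideal S) : ClassGroup S :=
  open Classical in
  if h : I ≠ ⊥ then ClassGroup.mk0 ⟨I, mem_nonZeroDivisors_iff_ne_zero.2 h⟩ else 1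

section cls
variable [IsDedekindDomain S]

theorem cls_of_ne {I : Ideal S} (h : I ≠ ⊥) :
    cls I = ClassGroup.mk0 ⟨I, mem_nonZeroDivisors_iff_ne_zero.2 h⟩ := dif_pos h

theorem cls_mul {I J : Ideal S} (hI : I ≠ ⊥) (hJ : J ≠ ⊥) : cls (I * J) = cls I * cls J := by
  rw [cls_of_ne hI, cls_of_ne hJ, cls_of_ne (mul_ne_zero hI hJ), ← map_mul]; rfl

theorem exists_cls (c : ClassGroup S) : ∃ I : Ideal S, I ≠ ⊥ ∧ cls I = c := by
  obtain ⟨I, rfl⟩ := ClassGroup.mk0_surjective c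
  have h := mem_nonZeroDivisors_iff_ne_zero.1 I.2
  exact ⟨I, h, cls_of_ne h⟩

theorem cls_eq_iff {I J : Ideal S} (hI : I ≠ ⊥) (hJ : J ≠ ⊥) : cls I = cls J ↔
    ∃ a b : S, a ≠ 0 ∧ b ≠ 0 ∧ Ideal.span {a} * I = Ideal.span {b} * J := by
  rw [cls_of_ne hI, cls_of_ne hJ, ClassGroup.mk0_eq_mk0_iff]
  simp only [exists_prop, exists_and_left]

theorem cls_eq_one_iff {I : Ideal S} (hI : I ≠ ⊥) : cls I = 1 ↔ ∃ a, I = Ideal.span {a} := by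
  rw [cls_of_ne hI, ClassGroup.mk0_eq_one_iff]
  exact ⟨fun ⟨a, ha⟩ => ⟨a, ha⟩, fun ⟨a, ha⟩ => ⟨a, ha⟩⟩

theorem cls_span (a : S) : cls (Ideal.span {a}) = 1 := by
  by_cases h : Ideal.span {a} = ⊥
  · simp [cls, h]
  · exact (cls_eq_one_iff h).2 ⟨a, rfl⟩

theorem cls_pow {I : Ideal S} (hI : I ≠ ⊥) (n : ℕ) : cls (I ^ n) = cls I ^ n := by
  induction n with
  | zero => rw [pow_zero, pow_zero, Ideal.one_eq_top, ← Ideal.span_singleton_one, cls_span]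
  | succ n ih => rw [pow_succ, pow_succ, cls_mul (pow_ne_zero n hI) hI, ih]

theorem cls_prod {ι : Type*} (s : Finset ι) {f : ι → Ideal S} (hf : ∀ i, f i ≠ ⊥) :
    cls (∏ i ∈ s, f i) = ∏ i ∈ s, cls (f i) := by
  classical
  induction s using Finset.induction_on with
  | empty => simp only [Finset.prod_empty]; rw [Ideal.one_eq_top, ← Ideal.span_singleton_one, cls_span]
  | insert a s ha ih =>
    rw [Finset.prod_insert ha, Finset.prod_insert ha, cls_mul (hf a), ih]
    exact Finset.prod_ne_zero_iff.2 fun i _ => hf i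

end cls

/-- `Tw I u` says that `τ I = β I` for some `β` in the fraction field of `S` with norm `u`; the
element `β` is written as the fraction `α / δ`. -/
def Tw (I : Ideal S) (u : Rˣ) : Prop :=
  ∃ α δ : S, α ≠ 0 ∧ δ ≠ 0 ∧ Ideal.span {δ} * D.cj I = Ideal.span {α} * I ∧
    D.nm α = u * D.nm δ

theorem Tw.mul {I J : Ideal S} {u v : Rˣ} (h : D.Tw I u) (h' : D.Tw J v) :
    D.Tw (I * J) (u * v) := by
  obtain ⟨a, d, ha, hd, e, n⟩ := h
  obtain ⟨a', d', ha', hd', e', n'⟩ := h'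
  refine ⟨a * a', d * d', mul_ne_zero ha ha', mul_ne_zero hd hd', ?_, ?_⟩
  · rw [cj_mul, ← Ideal.span_singleton_mul_span_singleton, ← Ideal.span_singleton_mul_span_singleton,
      mul_mul_mul_comm, e, e', mul_mul_mul_comm]
  · rw [map_mul, map_mul, n, n', Units.val_mul]; ring

theorem Tw.of_unit {I : Ideal S} {u : Rˣ} (h : D.Tw I u) {η : Sˣ} (hη : (u : R) = D.nm η) :
    D.Tw I 1 := by
  obtain ⟨a, d, ha, hd, e, n⟩ := h
  refine ⟨a, d * η, ha, by simpa using hd, ?_, ?_⟩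
  · rw [Ideal.span_singleton_mul_right_unit η.isUnit, e]
  · rw [map_mul, n, hη]; simp [mul_comm]

/-- If `I² = (a)` and `I * τ I = (x)` with `x ∈ R`, then `τ I = (x / a) I`, and `x / a` has unit
norm. -/
theorem exists_Tw [IsPrincipalIdealRing R] [IsDedekindDomain S] {I : Ideal S} (hI : I ≠ ⊥)
    (h : cls I * cls I = 1) : ∃ u, D.Tw I u := by
  rw [← cls_mul hI hI, cls_eq_one_iff (mul_ne_zero hI hI)] at h
  obtain ⟨a, ha⟩ := h
  obtain ⟨x, hx⟩ := D.exists_norm I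
  have hx0 : algebraMap R S x ≠ 0 := by
    intro h0
    rw [h0, Ideal.span_singleton_eq_bot.2 rfl] at hx
    exact mul_ne_zero hI (D.cj_ne_bot hI) hx
  have ha0 : a ≠ 0 := by
    rintro rfl
    rw [Ideal.span_singleton_eq_bot.2 rfl] at ha
    exact mul_ne_zero hI hI ha
  have hx0' : x ≠ 0 := by rintro rfl; simp at hx0
  have : IsDomain R := (FaithfulSMul.algebraMap_injective R S).isDomain (algebraMap R S)
  obtain ⟨v, hv⟩ := D.exists_unit_of_span_eq (a := x * x) (b := D.nm a) (D.nm_ne_zero ha0) (by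
    rw [nm_spec, map_mul, ← Ideal.span_singleton_mul_span_singleton,
      ← Ideal.span_singleton_mul_span_singleton, ← D.cj_span, ← ha, ← hx, cj_mul]
    ring)
  refine ⟨v, algebraMap R S x, a, hx0, ha0, ?_, ?_⟩
  · rw [← ha, ← hx]; ring
  · rw [nm_algebraMap, sq, hv]

/-- Hilbert 90: if `τ I = β I` with `β` of norm `1`, then `I` is equivalent to an invariant ideal. -/
theorem Tw.exists_inv [IsDedekindDomain S] {I : Ideal S} (h : D.Tw I 1) :
    ∃ γ : S, γ ≠ 0 ∧ D.cj (Ideal.span {γ} * I) = Ideal.span {γ} * I := by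
  obtain ⟨α, δ, hα, hδ, e, n⟩ := h
  rw [Units.val_one, one_mul] at n
  have hδ' : Ideal.span {δ} ≠ ⊥ := by simpa using hδ
  by_cases h0 : δ + α = 0
  · refine ⟨1, one_ne_zero, ?_⟩
    have : α = -δ := by linear_combination h0
    rw [this, Ideal.span_singleton_neg] at e
    rw [Ideal.span_singleton_one, Ideal.top_mul]
    exact mul_left_cancel₀ hδ' e
  · have hγ : (δ + α) * D.τ δ ≠ 0 := mul_ne_zero h0 (by simpa using hδ)
    refine ⟨(δ + α) * D.τ δ, hγ, mul_left_cancel₀ hδ' ?_⟩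
    have n' : α * D.τ α = δ * D.τ δ := by rw [← nm_spec, ← nm_spec, n]
    have key : D.τ ((δ + α) * D.τ δ) * α = δ * ((δ + α) * D.τ δ) := by
      rw [map_mul, D.invol, map_add]
      linear_combination δ * n'
    rw [cj_mul, cj_span, mul_left_comm, e, ← mul_assoc, ← mul_assoc,
      Ideal.span_singleton_mul_span_singleton, Ideal.span_singleton_mul_span_singleton, key]

/-- A finite family of invariant nonzero primes of `S` that contains all primes dividing `s`. -/
structure Ram (ι : Type*) where
  /-- The primes of the family. -/
  P : ι → Ideal S
  prime : ∀ i, (P i).IsPrime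
  ne_bot : ∀ i, P i ≠ ⊥
  cj_eq : ∀ i, D.cj (P i) = P i
  all : ∀ Q : Ideal S, Q.IsPrime → D.s ∈ Q → ∃ i, Q = P i

variable {D}

/-- An invariant ideal is a product of ramified primes and an ideal extended from `R`: the primes of
its factorization are ramified, or extended from `R`, or occur together with their conjugates. -/
theorem Ram.ambig {ι : Type*} [Fintype ι] (T : D.Ram ι) [IsPrincipalIdealRing R]
    [IsDedekindDomain S] (J : Ideal S) (hJ : J ≠ ⊥) (hcj : D.cj J = J) :
    ∃ (x : R) (v : ι → ℕ), J = Ideal.span {algebraMap R S x} * ∏ i, T.P i ^ v i := by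
  classical
  induction J using WellFoundedGT.induction with
  | ind J ih =>
  by_cases htop : J = ⊤
  · exact ⟨1, 0, by simp [htop, ← Ideal.one_eq_top]⟩
  obtain ⟨Q, hQm, hJQ⟩ := Ideal.exists_le_maximal J htop
  have hQ := hQm.isPrime
  have hQ0 : Q ≠ ⊥ := fun h => hJ (le_bot_iff.1 (h ▸ hJQ))
  obtain ⟨J', rfl⟩ := Ideal.dvd_iff_le.2 hJQ
  have hJ' : J' ≠ ⊥ := right_ne_zero_of_mul hJ
  have hlt : ∀ A B : Ideal S, A ≠ ⊤ → A * B ≠ ⊥ → A * B < B := by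
    intro A B hA hAB
    refine lt_of_le_of_ne Ideal.mul_le_right fun h => hA ?_
    rw [← Ideal.one_eq_top]
    refine mul_right_cancel₀ (right_ne_zero_of_mul hAB) ?_
    rw [h, one_mul]
  by_cases hc : D.cj Q = Q
  · rw [cj_mul, hc] at hcj
    obtain ⟨x, v, hxv⟩ := ih J' (hlt _ _ hQm.ne_top hJ) hJ' (mul_left_cancel₀ hQ0 hcj)
    by_cases hs : D.s ∈ Q
    · obtain ⟨i, rfl⟩ := T.all Q hQ hs
      refine ⟨x, v + Pi.single i 1, ?_⟩
      have : ∏ j, T.P j ^ (v + Pi.single i 1 : ι → ℕ) j = (∏ j, T.P j ^ v j) * T.P i := by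
        simp only [Pi.add_apply, pow_add, Finset.prod_mul_distrib]
        congr 1
        rw [Finset.prod_eq_single i]
        · simp
        · intro b _ hb; simp [hb]
        · simp
      rw [this, hxv]; ring
    · obtain ⟨y, hy⟩ := D.prime_of_cj_eq hQ hQ0 hc hs
      refine ⟨y * x, v, ?_⟩
      rw [map_mul, ← Ideal.span_singleton_mul_span_singleton, ← hy, mul_assoc, ← hxv]
  · have hcQ := D.cj_isPrime hQ
    have hcQ0 := D.cj_ne_bot hQ0
    have hdvd : D.cj Q ∣ Q * J' := by
      rw [← hcj, cj_mul]; exact dvd_mul_right _ _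
    have hdvd' : D.cj Q ∣ J' := by
      rcases (Ideal.prime_of_isPrime hcQ0 hcQ).dvd_or_dvd hdvd with h | h
      · exact absurd (hQm.eq_of_le hcQ.ne_top (Ideal.dvd_iff_le.1 h)).symm hc
      · exact h
    obtain ⟨J'', rfl⟩ := hdvd'
    obtain ⟨y, hy⟩ := D.exists_norm Q
    rw [← mul_assoc, hy] at hcj ⊢
    have hJ'' : J'' ≠ ⊥ := right_ne_zero_of_mul hJ'
    have hJ2 : Ideal.span {algebraMap R S y} * J'' ≠ ⊥ := by rw [← hy, mul_assoc]; exact hJ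
    rw [cj_mul, cj_span_amap] at hcj
    obtain ⟨x, v, hxv⟩ := ih J'' (by
        rw [← mul_assoc, hy]
        refine hlt _ _ ?_ hJ2
        rw [← hy]
        exact fun h => hQm.ne_top (top_le_iff.1 (h ▸ Ideal.mul_le_left)))
      hJ'' (mul_left_cancel₀ (left_ne_zero_of_mul hJ2) hcj)
    refine ⟨y * x, v, ?_⟩
    rw [map_mul, ← Ideal.span_singleton_mul_span_singleton, mul_assoc, ← hxv]

/-- The localization of `S` at a prime `P` is a valuation ring: one of `α / δ` and `δ / α` has a
representation with denominator outside `P`. -/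
theorem exists_notMem_dvd [IsDedekindDomain S] {P : Ideal S} (hP : P.IsPrime) (α : S) {δ : S}
    (hδ : δ ≠ 0) : (∃ e ∉ P, δ ∣ α * e) ∨ (∃ e ∉ P, α ∣ δ * e) := by
  -- write `(α) = I A`, `(δ) = I B` with `A + B = 1`
  obtain ⟨I, hI⟩ : ∃ I, I = Ideal.span {α, δ} := ⟨_, rfl⟩
  obtain ⟨A, hA⟩ : I ∣ Ideal.span {α} :=
    Ideal.dvd_iff_le.2 (by rw [hI]; exact Ideal.span_mono (by simp))
  obtain ⟨B, hB⟩ : I ∣ Ideal.span {δ} :=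
    Ideal.dvd_iff_le.2 (by rw [hI]; exact Ideal.span_mono (by simp))
  have hI0 : I ≠ ⊥ := by
    intro h0
    rw [h0, Ideal.bot_mul, Ideal.span_singleton_eq_bot] at hB
    exact hδ hB
  have hAB : A ⊔ B = ⊤ := by
    have : I * (A ⊔ B) = I * 1 := by
      rw [Ideal.mul_sup, ← hA, ← hB, mul_one, hI, ← Ideal.span_union]; rfl
    rw [← Ideal.one_eq_top]
    exact mul_left_cancel₀ hI0 this
  by_cases hBP : B ≤ P
  · right
    have hAP : ¬ A ≤ P := fun h => hP.ne_top (top_le_iff.1 (hAB ▸ sup_le h hBP))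
    obtain ⟨e, he, heP⟩ := SetLike.not_le_iff_exists.1 hAP
    refine ⟨e, heP, Ideal.mem_span_singleton.1 ?_⟩
    have : δ * e ∈ Ideal.span {δ} * A := Ideal.mul_mem_mul (Ideal.mem_span_singleton_self δ) he
    rw [hB, mul_right_comm, ← hA] at this
    exact Ideal.mul_le_left this
  · left
    obtain ⟨e, he, heP⟩ := SetLike.not_le_iff_exists.1 hBP
    refine ⟨e, heP, Ideal.mem_span_singleton.1 ?_⟩
    have : α * e ∈ Ideal.span {α} * B := Ideal.mul_mem_mul (Ideal.mem_span_singleton_self α) he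
    rw [hA, mul_right_comm, ← hB] at this
    exact Ideal.mul_le_left this

/-- An element of `R` that is a norm from the fraction field of `S` is a square in the residue field
of a ramified prime `P`, because `τ` acts trivially on `S / P`. Divisibility by `P` is removed
from numerator and denominator with `exists_notMem_dvd`. -/
theorem isSquare_of_nm [IsDedekindDomain S] {k : Type*} [Field k] (ψ : R →+* k) {P : Ideal S}
    (hP : P.IsPrime) (hψ : ∀ r, algebraMap R S r ∈ P ↔ ψ r = 0) (hcj : D.cj P = P)
    (hres : ∀ y : S, ∃ r : R, y - algebraMap R S r ∈ P) {α δ : S} (hδ : δ ≠ 0) {x : R}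
    (h : D.nm α = x * D.nm δ) : IsSquare (ψ x) := by
  have : IsDomain R := (FaithfulSMul.algebraMap_injective R S).isDomain (algebraMap R S)
  have hsq : ∀ y : S, ∃ a : k, ψ (D.nm y) = a ^ 2 ∧ (a = 0 → y ∈ P) := by
    intro y
    obtain ⟨r, hr⟩ := hres y
    refine ⟨ψ r, ?_, ?_⟩
    · rw [← map_pow, ← sub_eq_zero, ← map_sub, ← hψ, map_sub, nm_spec, map_pow]
      have hr' : D.τ y - algebraMap R S r ∈ P := by
        rw [← hcj, mem_cj, map_sub, D.invol]; simpa using hr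
      have : y * D.τ y - algebraMap R S r ^ 2 = (y - algebraMap R S r) * D.τ y +
        algebraMap R S r * (D.τ y - algebraMap R S r) := by ring
      rw [this]
      exact add_mem (P.mul_mem_right _ hr) (P.mul_mem_left _ hr')
    · intro h0
      have := add_mem hr ((hψ r).2 h0)
      simpa using this
  have key : ∀ α δ : S, D.nm α = x * D.nm δ → (α ∉ P ∨ δ ∉ P) → IsSquare (ψ x) := by
    intro α δ h hn
    obtain ⟨a, ha, ha'⟩ := hsq α
    obtain ⟨d, hd, hd'⟩ := hsq δ
    have e : a ^ 2 = ψ x * d ^ 2 := by rw [← ha, ← hd, ← map_mul, h]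
    have hd0 : d ≠ 0 := by
      rintro rfl
      have : a = 0 := by simpa using e
      rcases hn with hn | hn
      · exact hn (ha' this)
      · exact hn (hd' rfl)
    exact ⟨a / d, by field_simp; exact e.symm⟩
  rcases exists_notMem_dvd hP α hδ with ⟨e, heP, α', hα'⟩ | ⟨e, heP, δ', hδ'⟩
  · refine key α' e ?_ (Or.inr heP)
    have e2 := congrArg D.nm hα'
    rw [map_mul, map_mul, h] at e2
    refine mul_left_cancel₀ (D.nm_ne_zero hδ) ?_
    rw [← e2]; ring
  · refine key e δ' ?_ (Or.inl heP)
    have e2 := congrArg D.nm hδ'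
    rw [map_mul, map_mul, h] at e2
    refine mul_left_cancel₀ (D.nm_ne_zero hδ) ?_
    rw [e2]; ring

end QuadSetup

/-! ### The ambiguous class number inequality -/

/-- The homomorphism `𝔽₂^ι → Q` given by elements of order dividing two. -/
def thetaHom {ι Q : Type*} [Fintype ι] [CommGroup Q] (c : ι → Q) (hc : ∀ i, c i * c i = 1) :
    Multiplicative (ι → ZMod 2) →* Q where
  toFun v := ∏ i, c i ^ (v.toAdd i).val
  map_one' := by simp
  map_mul' v w := by
    rw [← Finset.prod_mul_distrib]
    refine Finset.prod_congr rfl fun i _ => ?_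
    rw [toAdd_mul, Pi.add_apply, ← pow_add]
    rw [ZMod.val_add]
    conv_rhs => rw [← Nat.div_add_mod ((v.toAdd i).val + (w.toAdd i).val) 2, pow_add, pow_mul,
      pow_two, hc, one_pow, one_mul]

theorem thetaHom_apply {ι Q : Type*} [Fintype ι] [CommGroup Q] (c : ι → Q)
    (hc : ∀ i, c i * c i = 1) (v : ι → ZMod 2) :
    thetaHom c hc (Multiplicative.ofAdd v) = ∏ i, c i ^ (v i).val := rfl

theorem thetaHom_natCast {ι Q : Type*} [Fintype ι] [CommGroup Q] (c : ι → Q)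
    (hc : ∀ i, c i * c i = 1) (v : ι → ℕ) :
    thetaHom c hc (Multiplicative.ofAdd fun i => (v i : ZMod 2)) = ∏ i, c i ^ v i := by
  rw [thetaHom_apply]
  refine Finset.prod_congr rfl fun i _ => ?_
  rw [ZMod.val_natCast]
  conv_rhs => rw [← Nat.div_add_mod (v i) 2, pow_add, pow_mul, pow_two, hc, one_pow, one_mul]

namespace QuadSetup

variable {R S : Type*} [CommRing R] [CommRing S] [IsDomain S] [Algebra R S] [FaithfulSMul R S]
  (D : QuadSetup R S)

/-- The relative norm on units. -/
noncomputable def unm : Sˣ →* Rˣ := Units.map D.nm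

@[simp] theorem unm_val (u : Sˣ) : (D.unm u : R) = D.nm u := rfl

/-- Conjugation on units. -/
def uτ : Sˣ →* Sˣ := Units.map (D.τ : S →* S)

@[simp] theorem uτ_val (u : Sˣ) : (D.uτ u : S) = D.τ u := rfl

/-- The map `u ↦ u / τ u` on units. -/
def dmap : Sˣ →* Sˣ := MonoidHom.id _ / D.uτ

theorem dmap_apply (u : Sˣ) : D.dmap u = u / D.uτ u := rfl

/-- The embedding of the units of `R` into those of `S`. -/
def uι (R S : Type*) [CommRing R] [CommRing S] [Algebra R S] : Rˣ →* Sˣ :=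
  Units.map (algebraMap R S : R →* S)

@[simp] theorem uι_val (u : Rˣ) : (uι R S u : S) = algebraMap R S u := rfl

theorem uι_unm (u : Sˣ) : uι R S (D.unm u) = u * D.uτ u := by
  ext; simp [nm_spec]

theorem unm_uι (u : Rˣ) : D.unm (uι R S u) = u ^ 2 := by
  ext; simp

theorem uι_inj : Function.Injective (uι R S) := by
  intro a b h
  ext
  apply FaithfulSMul.algebraMap_injective R S
  exact congrArg Units.val h

theorem mem_ker_unm {u : Sˣ} : u ∈ D.unm.ker ↔ D.uτ u = u⁻¹ := by
  rw [MonoidHom.mem_ker, ← (uι_inj (R := R) (S := S)).eq_iff, uι_unm, map_one,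
    eq_inv_iff_mul_eq_one, mul_comm]

theorem uτ_uτ (u : Sˣ) : D.uτ (D.uτ u) = u := by ext; simp [D.invol]

theorem dmap_mem (u : Sˣ) : D.dmap u ∈ D.unm.ker := by
  rw [mem_ker_unm, dmap_apply, map_div, uτ_uτ, inv_div]

theorem ker_dmap : D.dmap.ker = (uι R S).range := by
  ext u
  rw [MonoidHom.mem_ker, dmap_apply, div_eq_one, MonoidHom.mem_range]
  constructor
  · intro h
    obtain ⟨r, hr⟩ := D.fixed u (by rw [← uτ_val, ← h])
    have h' : u⁻¹ = D.uτ u⁻¹ := by rw [map_inv, ← h]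
    obtain ⟨r', hr'⟩ := D.fixed (u⁻¹ : Sˣ) (by rw [← uτ_val, ← h'])
    refine ⟨⟨r, r', ?_, ?_⟩, ?_⟩
    · apply FaithfulSMul.algebraMap_injective R S; rw [map_mul, hr, hr']; simp
    · apply FaithfulSMul.algebraMap_injective R S; rw [map_mul, hr, hr']; simp
    · ext; exact hr
  · rintro ⟨r, rfl⟩
    ext; simp

/-- The Herbrand quotient of the units, in the form `|ker N / (1 - τ)| = 2 |Rˣ / N Sˣ|`. Both sides
are computed from the subgroup `Rˣ · ker N` of `Sˣ`, whose images under `N` and `1 - τ` are the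
groups of squares of `Rˣ` and of `ker N`. -/
theorem unit_index (h8 : (powMonoidHom 2 : D.unm.ker →* D.unm.ker).range.index = 8)
    (h4 : (powMonoidHom 2 : Rˣ →* Rˣ).range.index = 4) :
    D.dmap.range.relIndex D.unm.ker = 2 * D.unm.range.index ∧ D.unm.range.index ≠ 0 := by
  set Q : Subgroup Sˣ := (uι R S).range ⊔ D.unm.ker with hQ
  have e1 : Q.map D.unm = (powMonoidHom 2 : Rˣ →* Rˣ).range := by
    rw [hQ, Subgroup.map_sup, (Subgroup.map_eq_bot_iff _).2 le_rfl, sup_bot_eq,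
      MonoidHom.map_range]
    congr 1
    ext1 u
    simp [unm_uι]
  have e2 : Q.map D.dmap = D.unm.ker.map (powMonoidHom 2) := by
    rw [hQ, Subgroup.map_sup, ← ker_dmap, (Subgroup.map_eq_bot_iff _).2 le_rfl, bot_sup_eq]
    ext u
    simp only [Subgroup.mem_map]
    refine exists_congr fun w => and_congr_right fun hw => ?_
    rw [dmap_apply, D.mem_ker_unm.1 hw, div_inv_eq_mul, powMonoidHom_apply, sq]
  have i1 : Q.index * D.unm.range.index = 4 := by
    rw [← h4, ← e1, Subgroup.index_map]
    congr 2
    rw [hQ, sup_assoc, sup_idem]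
  have i2 : (D.unm.ker.map (powMonoidHom 2)).relIndex D.dmap.range = Q.index := by
    rw [← e2, MonoidHom.range_eq_map, Subgroup.relIndex_map_map, top_sup_eq,
      Subgroup.relIndex_top_right]
    congr 1
    rw [ker_dmap, hQ, sup_comm, ← sup_assoc, sup_idem]
  have hle1 : D.unm.ker.map (powMonoidHom 2) ≤ D.dmap.range := by
    rw [← e2]; exact Subgroup.map_le_range _ _
  have hle2 : D.dmap.range ≤ D.unm.ker := by
    rintro _ ⟨u, rfl⟩; exact D.dmap_mem u
  have i3 : (D.unm.ker.map (powMonoidHom 2)).relIndex D.unm.ker = 8 := by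
    rw [← h8, Subgroup.relIndex]
    congr 1
    ext ⟨u, hu⟩
    simp only [Subgroup.mem_subgroupOf, Subgroup.mem_map, MonoidHom.mem_range, Subtype.ext_iff]
    constructor
    · rintro ⟨w, hw, h⟩; exact ⟨⟨w, hw⟩, h⟩
    · rintro ⟨⟨w, hw⟩, h⟩; exact ⟨w, hw, h⟩
  have i4 := Subgroup.relIndex_mul_relIndex _ _ _ hle1 hle2
  rw [i2, i3] at i4
  have hQ0 : Q.index ≠ 0 := by rintro h; rw [h] at i1; simp at i1
  refine ⟨mul_left_cancel₀ hQ0 ?_, by rintro h; rw [h] at i1; simp at i1⟩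
  rw [i4, mul_left_comm, i1]
  norm_num

variable {D}

theorem Ram.sq_cls {ι : Type*} (T : D.Ram ι) [IsPrincipalIdealRing R] [IsDedekindDomain S] (i : ι) :
    cls (T.P i) * cls (T.P i) = 1 := by
  obtain ⟨x, hx⟩ := D.exists_norm (T.P i)
  rw [T.cj_eq] at hx
  rw [← cls_mul (T.ne_bot i) (T.ne_bot i), hx, cls_span]

/-- The homomorphism from `𝔽₂^ι` to the class group given by the classes of the ramified primes. -/
noncomputable def Ram.θ {ι : Type*} [Fintype ι] (T : D.Ram ι) [IsPrincipalIdealRing R]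
    [IsDedekindDomain S] : Multiplicative (ι → ZMod 2) →* ClassGroup S :=
  thetaHom (fun i => cls (T.P i)) T.sq_cls

theorem Ram.cls_prod {ι : Type*} [Fintype ι] (T : D.Ram ι) [IsPrincipalIdealRing R]
    [IsDedekindDomain S] {J : Ideal S} (hJ : J ≠ ⊥) {x : R} {v : ι → ℕ}
    (h : J = Ideal.span {algebraMap R S x} * ∏ i, T.P i ^ v i) :
    cls J = T.θ (Multiplicative.ofAdd fun i => (v i : ZMod 2)) := by
  rw [Ram.θ, thetaHom_natCast, h]
  rw [h] at hJ
  rw [cls_mul (left_ne_zero_of_mul hJ) (right_ne_zero_of_mul hJ), cls_span, one_mul,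
    QuadSetup.cls_prod _ fun i => pow_ne_zero _ (T.ne_bot i)]
  exact Finset.prod_congr rfl fun i _ => cls_pow (T.ne_bot i) _

theorem Ram.even_prod {ι : Type*} [Fintype ι] (T : D.Ram ι) [IsPrincipalIdealRing R]
    [IsDedekindDomain S] (v : ι → ℕ) (hv : ∀ i, (v i : ZMod 2) = 0) :
    ∃ y : R, ∏ i, T.P i ^ v i = Ideal.span {algebraMap R S y} := by
  choose x hx using fun i => D.exists_norm (T.P i)
  refine ⟨∏ i, x i ^ (v i / 2), ?_⟩
  rw [map_prod, ← Ideal.prod_span_singleton]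
  refine Finset.prod_congr rfl fun i _ => ?_
  have : v i = 2 * (v i / 2) := by
    have := (ZMod.natCast_eq_zero_iff (v i) 2).1 (hv i)
    omega
  conv_lhs => rw [this, pow_mul, pow_two]
  nth_rw 2 [← T.cj_eq i]
  rw [hx, map_pow, Ideal.span_singleton_pow]

/-- Hilbert 90 for a unit `η` of norm `1`: one may take `γ = 1 + η`, or `γ = s` when `η = -1`. -/
theorem exists_hilbert90 (D : QuadSetup R S) {η : Sˣ} (hη : η ∈ D.unm.ker) :
    ∃ γ : S, γ ≠ 0 ∧ γ = η * D.τ γ := by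
  rw [mem_ker_unm] at hη
  have h1 : D.τ η = (η⁻¹ : Sˣ) := by rw [← hη]; rfl
  by_cases h : (1 : S) + η = 0
  · refine ⟨D.s, D.s_ne, ?_⟩
    rw [D.τ_s]; linear_combination D.s * h
  · refine ⟨1 + η, h, ?_⟩
    rw [map_add, map_one, h1, mul_add, Units.mul_inv]; ring

/-- A unit `η = γ / τ γ` of norm `1` makes `(γ)` invariant, and so yields a relation between the
classes of the ramified primes; two units give the same relation only if their product lies in
the image of `1 - τ`. -/
theorem Ram.le_card_ker {ι : Type*} [Fintype ι] (T : D.Ram ι) [IsPrincipalIdealRing R]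
    [IsDedekindDomain S] : D.dmap.range.relIndex D.unm.ker ≤ Nat.card T.θ.ker := by
  have key : ∀ η : D.unm.ker, ∃ (γ : S) (x : R) (v : ι → ℕ), γ ≠ 0 ∧ γ = ((η : Sˣ) : S) * D.τ γ ∧
      Ideal.span {γ} = Ideal.span {algebraMap R S x} * ∏ i, T.P i ^ v i := by
    intro η
    obtain ⟨γ, hγ, h⟩ := D.exists_hilbert90 η.2
    obtain ⟨x, v, hxv⟩ := T.ambig (Ideal.span {γ}) (by simpa using hγ) (by
      rw [cj_span]
      conv_rhs => rw [h, Ideal.span_singleton_mul_left_unit (Units.isUnit _)])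
    exact ⟨γ, x, v, hγ, h, hxv⟩
  choose γ x v hγ h hxv using key
  let f : D.unm.ker → T.θ.ker := fun η => ⟨Multiplicative.ofAdd fun i => (v η i : ZMod 2), by
    rw [MonoidHom.mem_ker, ← T.cls_prod (by simpa using hγ η) (hxv η), cls_span]⟩
  have hf : ∀ η η', f η = f η' → (η * η' : Sˣ) ∈ D.dmap.range := by
    intro η η' he
    have hv : ∀ i, ((v η + v η') i : ZMod 2) = 0 := by
      intro i
      have : (v η i : ZMod 2) = v η' i :=
        congrFun (Multiplicative.ofAdd.injective (Subtype.ext_iff.1 he)) i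
      simp only [Pi.add_apply, Nat.cast_add]
      rw [this]
      exact CharTwo.add_self_eq_zero _
    obtain ⟨y, hy⟩ := T.even_prod _ hv
    have : Ideal.span {γ η * γ η'} = Ideal.span {algebraMap R S (x η * x η' * y)} := by
      rw [← Ideal.span_singleton_mul_span_singleton, hxv η, hxv η', map_mul, map_mul,
        ← Ideal.span_singleton_mul_span_singleton, ← Ideal.span_singleton_mul_span_singleton, ← hy]
      simp only [Pi.add_apply, pow_add, Finset.prod_mul_distrib]
      ring
    rw [Ideal.span_singleton_eq_span_singleton] at this
    obtain ⟨ε, hε⟩ := this.symm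
    have hne := mul_ne_zero (hγ η) (hγ η')
    set z := algebraMap R S (x η * x η' * y) with hz
    have hz0 : z ≠ 0 := by rintro h0; rw [h0, zero_mul] at hε; exact hne hε.symm
    refine ⟨ε, ?_⟩
    rw [dmap_apply, div_eq_iff_eq_mul]
    ext
    simp only [Units.val_mul, uτ_val]
    refine mul_left_cancel₀ hz0 ?_
    have e1 : γ η * γ η' = (η : Sˣ) * (η' : Sˣ) * D.τ (γ η * γ η') := by
      conv_lhs => rw [h η, h η']
      rw [map_mul]; ring
    rw [← hε, map_mul, hz, AlgEquiv.commutes, ← hz] at e1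
    linear_combination e1
  rw [Subgroup.relIndex, Subgroup.index]
  refine Nat.card_le_card_of_injective (fun q => f q.out) ?_
  intro q q' he
  have h1 := hf _ _ he
  rw [← q.out_eq', ← q'.out_eq']
  refine QuotientGroup.eq.2 ?_
  rw [Subgroup.mem_subgroupOf]
  have h2 : (q.out : Sˣ) * (q.out : Sˣ) ∈ D.dmap.range :=
    ⟨q.out, by rw [dmap_apply, D.mem_ker_unm.1 q.out.2, div_inv_eq_mul]⟩
  have : ((q.out⁻¹ * q'.out : D.unm.ker) : Sˣ) =
      ((q.out : Sˣ) * (q.out : Sˣ))⁻¹ * ((q.out : Sˣ) * (q'.out : Sˣ)) := by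
    simp only [Subgroup.coe_mul, Subgroup.coe_inv]; group
  rw [this]
  exact mul_mem (inv_mem h2) h1

/-- Sending a class of order two to the unit `u` of `Tw I u` is injective, modulo the classes of the
ramified primes on one side and the norms of units on the other. -/
theorem Ram.relIndex_le {ι : Type*} [Fintype ι] (T : D.Ram ι) [IsPrincipalIdealRing R]
    [IsDedekindDomain S] (M : Subgroup Rˣ) (hM : ∀ (I : Ideal S) u, D.Tw I u → u ∈ M)
    (hfin : D.unm.range.index ≠ 0) :
    T.θ.range.relIndex (powMonoidHom 2 : ClassGroup S →* ClassGroup S).ker ≤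
      D.unm.range.relIndex M := by
  have key : ∀ c : (powMonoidHom 2 : ClassGroup S →* ClassGroup S).ker,
      ∃ (I : Ideal S) (u : M), I ≠ ⊥ ∧ cls I = c ∧ D.Tw I u := by
    intro c
    obtain ⟨I, hI, hc⟩ := exists_cls (c : ClassGroup S)
    obtain ⟨u, hu⟩ := D.exists_Tw hI (by
      have := c.2
      rw [MonoidHom.mem_ker, powMonoidHom_apply, sq] at this
      rw [hc]; exact this)
    exact ⟨I, ⟨u, hM I u hu⟩, hI, hc, hu⟩
  choose I u hI hc hTw using key
  have : Finite (M ⧸ D.unm.range.subgroupOf M) := by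
    have : (D.unm.range.subgroupOf M).FiniteIndex :=
      ⟨fun h => hfin (Nat.eq_zero_of_zero_dvd (h ▸ Subgroup.relIndex_dvd_index_of_normal _ _))⟩
    infer_instance
  rw [Subgroup.relIndex, Subgroup.index, Subgroup.relIndex, Subgroup.index]
  refine Nat.card_le_card_of_injective
    (fun q => (QuotientGroup.mk (u q.out) : M ⧸ D.unm.range.subgroupOf M)) ?_
  intro q q' he
  have h1 := QuotientGroup.eq.1 he
  rw [Subgroup.mem_subgroupOf] at h1
  obtain ⟨η, hη⟩ := h1
  rw [← q.out_eq', ← q'.out_eq']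
  refine QuotientGroup.eq.2 ?_
  rw [Subgroup.mem_subgroupOf]
  have h2 := Tw.mul D (hTw q.out) (hTw q'.out)
  obtain ⟨γ, hγ, hinv⟩ := Tw.exists_inv D (Tw.of_unit D h2 (η := uι R S (u q.out) * η) (by
    have : D.unm (uι R S (u q.out) * η) = u q.out * u q'.out := by
      rw [map_mul, unm_uι, hη]; simp only [Subgroup.coe_mul, Subgroup.coe_inv]; group
    rw [← this]; rfl))
  have hγ' : Ideal.span {γ} ≠ ⊥ := by simpa using hγ
  have hII : I q.out * I q'.out ≠ ⊥ := mul_ne_zero (hI _) (hI _)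
  have hne : Ideal.span {γ} * (I q.out * I q'.out) ≠ ⊥ := mul_ne_zero hγ' hII
  obtain ⟨x, v, hxv⟩ := T.ambig _ hne hinv
  refine ⟨Multiplicative.ofAdd fun i => (v i : ZMod 2), ?_⟩
  rw [← T.cls_prod hne hxv, cls_mul hγ' hII, cls_mul (hI _) (hI _), cls_span, hc, hc, one_mul]
  have h3 := q.out.2
  rw [MonoidHom.mem_ker, powMonoidHom_apply, sq] at h3
  rw [Subgroup.coe_mul, Subgroup.coe_inv, inv_eq_of_mul_eq_one_left h3]

/-- The upper bound for the two-torsion of the class group with four ramified primes. Here `M` is any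
group of units containing all those that occur in a relation `Tw I u`, for instance a group cut
out by local conditions. -/
theorem Ram.card_le (T : D.Ram (Fin 4)) [IsPrincipalIdealRing R]
    [IsDedekindDomain S] (M : Subgroup Rˣ) (hM : ∀ (I : Ideal S) u, D.Tw I u → u ∈ M)
    (h8 : (powMonoidHom 2 : D.unm.ker →* D.unm.ker).range.index = 8)
    (h4 : (powMonoidHom 2 : Rˣ →* Rˣ).range.index = 4) :
    Nat.card (powMonoidHom 2 : ClassGroup S →* ClassGroup S).ker * M.index ≤ 8 := by
  obtain ⟨i1, i2⟩ := D.unit_index h8 h4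
  have h1 := T.le_card_ker
  have h2 := T.relIndex_le M hM i2
  have hNM : D.unm.range ≤ M := by
    rintro _ ⟨η, rfl⟩
    refine hM ⊤ _ ⟨η, 1, η.ne_zero, one_ne_zero, ?_, ?_⟩
    · rw [Ideal.span_singleton_one, Ideal.top_mul, Ideal.span_singleton_eq_top.2 η.isUnit,
        Ideal.top_mul, cj, Ideal.map_top]
    · simp
  have h3 := Subgroup.relIndex_mul_index hNM
  have h5 : Nat.card T.θ.ker * Nat.card T.θ.range = 16 := by
    rw [← Subgroup.index_ker, Subgroup.card_mul_index]
    simp [Nat.card_eq_fintype_card]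
  have hle : T.θ.range ≤ (powMonoidHom 2 : ClassGroup S →* ClassGroup S).ker := by
    rintro _ ⟨v, rfl⟩
    rw [MonoidHom.mem_ker, powMonoidHom_apply, ← map_pow]
    have : v ^ 2 = 1 := by
      apply Multiplicative.toAdd.injective
      funext i
      rw [toAdd_pow, toAdd_one, Pi.smul_apply, two_nsmul]
      exact CharTwo.add_self_eq_zero _
    rw [this, map_one]
  have h6 := Subgroup.relIndex_mul_relIndex ⊥ _ _ bot_le hle
  rw [Subgroup.relIndex_bot_left, Subgroup.relIndex_bot_left] at h6
  rw [← h6]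
  rw [i1] at h1
  refine Nat.le_of_mul_le_mul_left ?_ (show 0 < 2 by norm_num)
  calc 2 * (Nat.card T.θ.range * T.θ.range.relIndex _ * M.index)
      ≤ 2 * (Nat.card T.θ.range * (D.unm.range.relIndex M) * M.index) := by gcongr
    _ = Nat.card T.θ.range * (2 * (D.unm.range.index)) := by rw [← h3]; ring
    _ ≤ Nat.card T.θ.range * Nat.card T.θ.ker := by gcongr
    _ = 2 * 8 := by rw [mul_comm, h5]

end QuadSetup

/-! ### Lower bounds from norm residues -/

namespace QuadSetup

variable {R S : Type*} [CommRing R] [CommRing S] [IsDomain S] [Algebra R S] [FaithfulSMul R S]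
  (D : QuadSetup R S)

/-- An ideal whose class is a square has, up to a unit, a norm from the fraction field of `S` as
its relative norm. -/
theorem exists_nm_of_cls_sq [IsPrincipalIdealRing R] [IsDedekindDomain S] {I : Ideal S}
    (hI : I ≠ ⊥) {x : R} (hx : I * D.cj I = Ideal.span {algebraMap R S x})
    (hsq : cls I ∈ (powMonoidHom 2 : ClassGroup S →* ClassGroup S).range) :
    ∃ (u : Rˣ) (α δ : S), δ ≠ 0 ∧ D.nm α = u * x * D.nm δ := by
  have : IsDomain R := (FaithfulSMul.algebraMap_injective R S).isDomain (algebraMap R S)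
  obtain ⟨c, hc⟩ := hsq
  obtain ⟨J, hJ, rfl⟩ := exists_cls c
  rw [powMonoidHom_apply, ← cls_pow hJ, eq_comm, cls_eq_iff hI (pow_ne_zero 2 hJ)] at hc
  obtain ⟨a, b, ha, hb, hab⟩ := hc
  obtain ⟨y, hy⟩ := D.exists_norm J
  have hy0 : y ≠ 0 := by
    rintro rfl
    rw [map_zero, Ideal.span_singleton_zero] at hy
    exact mul_ne_zero hJ (D.cj_ne_bot hJ) hy
  have key : Ideal.span {algebraMap R S (D.nm a * x)} =
      Ideal.span {algebraMap R S (D.nm b * (y * y))} := by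
    have e := congrArg (fun K => K * D.cj K) hab
    simp only [cj_mul, cj_span, pow_two] at e
    rw [map_mul, map_mul, map_mul, nm_spec, nm_spec]
    simp only [← Ideal.span_singleton_mul_span_singleton]
    rw [← hx, ← hy]
    calc _ = Ideal.span {a} * I * (Ideal.span {D.τ a} * D.cj I) := by ring
      _ = _ := e
      _ = _ := by ring
  obtain ⟨u, hu⟩ := D.exists_unit_of_span_eq (mul_ne_zero (D.nm_ne_zero hb) (mul_ne_zero hy0 hy0)) key
  refine ⟨u⁻¹, b * algebraMap R S y, a, ha, ?_⟩
  rw [map_mul, nm_algebraMap, mul_assoc, mul_comm x, hu, ← mul_assoc, Units.inv_mul, one_mul, pow_two]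

/-- If `x₁, …, xₙ` generate relative norms of ideals and no nontrivial product of them is a unit times
a norm from the fraction field, then the classes of these ideals are independent modulo squares. -/
theorem two_pow_le_card [IsPrincipalIdealRing R] [IsDedekindDomain S] [Finite (ClassGroup S)] {n : ℕ}
    (x : Fin n → R) (hx0 : ∀ i, x i ≠ 0)
    (hx : ∀ i, ∃ I : Ideal S, I * D.cj I = Ideal.span {algebraMap R S (x i)})
    (hind : ∀ v : Fin n → ZMod 2, v ≠ 0 → ∀ (u : Rˣ) (α δ : S), δ ≠ 0 →
      D.nm α ≠ u * (∏ i, x i ^ (v i).val) * D.nm δ) :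
    2 ^ n ≤ Nat.card (ClassGroup S ⧸ (powMonoidHom 2 : ClassGroup S →* ClassGroup S).range) := by
  choose I hI using hx
  have hI0 : ∀ i, I i ≠ ⊥ := by
    intro i h
    have := hI i
    rw [h, Ideal.bot_mul, eq_comm, Ideal.span_singleton_eq_bot,
      map_eq_zero_iff _ (FaithfulSMul.algebraMap_injective R S)] at this
    exact hx0 i this
  let c : Fin n → ClassGroup S ⧸ (powMonoidHom 2 : ClassGroup S →* ClassGroup S).range :=
    fun i => QuotientGroup.mk (cls (I i))
  have hc : ∀ i, c i * c i = 1 := fun i =>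
    (QuotientGroup.eq_one_iff _).2 ⟨cls (I i), by rw [powMonoidHom_apply, pow_two]⟩
  have hinj : Function.Injective (thetaHom c hc) := by
    rw [injective_iff_map_eq_one]
    intro v hv
    by_contra hne
    have e : thetaHom c hc v = QuotientGroup.mk (cls (∏ i, I i ^ (v.toAdd i).val)) := by
      rw [QuadSetup.cls_prod _ fun i => pow_ne_zero _ (hI0 i)]
      change ∏ i, c i ^ (v.toAdd i).val = QuotientGroup.mk' _ _
      rw [map_prod]
      refine Finset.prod_congr rfl fun i _ => ?_
      rw [cls_pow (hI0 i), map_pow]; rfl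
    rw [e, QuotientGroup.eq_one_iff] at hv
    have hpx : (∏ i, I i ^ (v.toAdd i).val) * D.cj (∏ i, I i ^ (v.toAdd i).val) =
        Ideal.span {algebraMap R S (∏ i, x i ^ (v.toAdd i).val)} := by
      have e1 : D.cj (∏ i, I i ^ (v.toAdd i).val) = ∏ i, D.cj (I i) ^ (v.toAdd i).val := by
        rw [cj, ← Ideal.mapHom_apply, map_prod]
        simp only [map_pow]; rfl
      rw [e1, ← Finset.prod_mul_distrib, map_prod, ← Ideal.prod_span_singleton]
      refine Finset.prod_congr rfl fun i _ => ?_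
      rw [← mul_pow, hI, map_pow, Ideal.span_singleton_pow]
    obtain ⟨u, α, δ, hδ, h⟩ := D.exists_nm_of_cls_sq
      (Finset.prod_ne_zero_iff.2 fun i _ => pow_ne_zero _ (hI0 i)) hpx hv
    exact hind v.toAdd (fun h => hne (Multiplicative.toAdd.injective h)) u α δ hδ h
  have := Nat.card_le_card_of_injective _ hinj
  simpa [Nat.card_eq_fintype_card] using this

end QuadSetup

/-! ### Auxiliary primes -/

/-- Thue's argument for the form `a² + 2b²`. -/
theorem exists_sq_add_two_sq {q : ℕ} (hq : q.Prime) {c : ZMod q} (hc : c * c = -2) :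
    ∃ a b : ℤ, a ^ 2 + 2 * b ^ 2 = q := by
  have : Fact q.Prime := ⟨hq⟩
  set r := Nat.sqrt q with hr
  have hr1 : r * r < q := by
    refine lt_of_le_of_ne (Nat.sqrt_le q) fun h => ?_
    rw [← h] at hq
    exact Nat.not_prime_mul (fun h1 => by rw [h1] at hq; exact hq.ne_one rfl)
      (fun h1 => by rw [h1] at hq; exact hq.ne_one rfl) hq
  have hr2 : q < (r + 1) * (r + 1) := Nat.lt_succ_sqrt q
  obtain ⟨⟨x, y⟩, hxy, ⟨x', y'⟩, hxy', hne, he⟩ :=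
    Finset.exists_ne_map_eq_of_card_lt_of_maps_to
      (s := Finset.range (r + 1) ×ˢ Finset.range (r + 1)) (t := (Finset.univ : Finset (ZMod q)))
      (f := fun z => (z.1 : ZMod q) - c * z.2)
      (by rw [Finset.card_product, Finset.card_range, Finset.card_univ, ZMod.card]; exact hr2)
      (fun _ _ => Finset.mem_univ _)
  simp only [Finset.mem_product, Finset.mem_range] at hxy hxy'
  set X : ℤ := x - x' with hX
  set Y : ℤ := y - y' with hY
  have hX2 : X ^ 2 ≤ r * r := by
    have : |X| ≤ r := by rw [abs_le]; constructor <;> omega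
    nlinarith [sq_abs X, abs_nonneg X]
  have hY2 : Y ^ 2 ≤ r * r := by
    have : |Y| ≤ r := by rw [abs_le]; constructor <;> omega
    nlinarith [sq_abs Y, abs_nonneg Y]
  have hpos : 0 < X ^ 2 + 2 * Y ^ 2 := by
    by_contra! h
    have h1 : X = 0 := by nlinarith [sq_nonneg X, sq_nonneg Y]
    have h2 : Y = 0 := by nlinarith [sq_nonneg X, sq_nonneg Y]
    exact hne (Prod.ext (by simp only; omega) (by simp only; omega))
  have hdvd : (q : ℤ) ∣ X ^ 2 + 2 * Y ^ 2 := by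
    rw [← ZMod.intCast_zmod_eq_zero_iff_dvd]
    have e : (X : ZMod q) = c * Y := by
      rw [hX, hY]; push_cast
      linear_combination he
    push_cast
    rw [e]
    linear_combination (Y : ZMod q) ^ 2 * hc
  have hr1' : (r : ℤ) * r < q := by exact_mod_cast hr1
  obtain ⟨k, hk⟩ := hdvd
  have hq0 : (0 : ℤ) < q := by exact_mod_cast hq.pos
  have hk1 : 0 < k := by by_contra! h; nlinarith
  have hk3 : k < 3 := by by_contra! h; nlinarith
  interval_cases k
  · exact ⟨X, Y, by rw [hk]; ring⟩
  · have h2 : (2 : ℤ) ∣ X := Int.prime_two.dvd_of_dvd_pow (n := 2) ⟨q - Y ^ 2, by linarith⟩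
    obtain ⟨Z, hZ⟩ := h2
    rw [hZ] at hk
    exact ⟨Y, Z, by linarith⟩

/-- Dirichlet's theorem and quadratic reciprocity provide a prime in a given class modulo `8` that is
a quadratic nonresidue modulo `p`. -/
theorem exists_prime_nonresidue {p : ℕ} [hp : Fact p.Prime] (hp8 : p % 8 = 1) {a : ℕ}
    (ha : a % 8 = 5 ∨ a % 8 = 3) :
    ∃ q : ℕ, q.Prime ∧ q % 8 = a % 8 ∧ ¬ IsSquare (q : ZMod p) ∧ ¬ IsSquare (p : ZMod q) := by
  have hp2 : p ≠ 2 := by rintro rfl; omega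
  obtain ⟨r, hr⟩ := FiniteField.exists_nonsquare (F := ZMod p) (by rwa [ZMod.ringChar_zmod_n])
  have hco : Nat.Coprime 8 p := by
    have : Nat.Coprime 2 p := (Nat.coprime_primes Nat.prime_two hp.out).2 hp2.symm
    exact Nat.Coprime.pow_left 3 this
  obtain ⟨k, hk8, hkp⟩ := Nat.chineseRemainder hco a r.val
  have hkp' : (k : ZMod p) = r := by
    rw [← ZMod.natCast_zmod_val r]; exact (ZMod.natCast_eq_natCast_iff _ _ _).2 hkp
  have hk8' : k % 8 = a % 8 := hk8
  have hcop : IsUnit (k : ZMod (8 * p)) := by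
    rw [ZMod.isUnit_iff_coprime]
    refine Nat.Coprime.mul_right ?_ ?_
    · change Nat.Coprime k (2 ^ 3)
      refine Nat.Coprime.pow_right 3 ?_
      rw [Nat.coprime_two_right, Nat.odd_iff]
      omega
    · rw [← ZMod.isUnit_iff_coprime, hkp']
      refine isUnit_iff_ne_zero.2 ?_
      rintro rfl
      exact hr (by simp)
  have : NeZero (8 * p) := ⟨by have := hp.out.pos; omega⟩
  obtain ⟨q, hqp, hq, hqk⟩ := Nat.forall_exists_prime_gt_and_eq_mod hcop p
  have hqk' : q ≡ k [MOD 8 * p] := (ZMod.natCast_eq_natCast_iff _ _ _).1 hqk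
  have hq8 : q % 8 = a % 8 := (hqk'.of_mul_right p).trans hk8
  have hqr : (q : ZMod p) = r := by
    rw [← hkp']; exact (ZMod.natCast_eq_natCast_iff _ _ _).2 (hqk'.of_mul_left 8)
  refine ⟨q, hq, hq8, by rwa [hqr], ?_⟩
  have : Fact q.Prime := ⟨hq⟩
  have hq2 : q ≠ 2 := by rintro rfl; omega
  rwa [← ZMod.exists_sq_eq_prime_iff_of_mod_four_eq_one (p := p) (q := q) (by omega) hq2, hqr]

theorem isCoprime_four_mul {p q : ℕ} (hp : p.Prime) (hq : q.Prime) (hq2 : q ≠ 2) (hpq : q ≠ p) :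
    IsCoprime (q : ℤ) (2 * 2 * p) := by
  have h2 : IsCoprime (q : ℤ) (2 : ℕ) := Nat.isCoprime_iff_coprime.2
    ((Nat.coprime_primes hq Nat.prime_two).2 hq2)
  have h3 : IsCoprime (q : ℤ) p := Nat.isCoprime_iff_coprime.2
    ((Nat.coprime_primes hq hp).2 hpq)
  exact (h2.mul_right h2).mul_right h3

theorem isSquare_mul_of_not {q : ℕ} [hq : Fact q.Prime] {a b : ZMod q}
    (ha : ¬ IsSquare a) (hb : ¬ IsSquare b) : IsSquare (a * b) := by
  have ha0 : a ≠ 0 := by rintro rfl; exact ha (by simp)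
  have hb0 : b ≠ 0 := by rintro rfl; exact hb (by simp)
  have hq2 : q ≠ 2 := by
    rintro rfl
    exact ha (FiniteField.isSquare_of_char_two (ZMod.ringChar_zmod_n 2) a)
  have hc : ringChar (ZMod q) ≠ 2 := by rwa [ZMod.ringChar_zmod_n]
  rw [← quadraticChar_one_iff_isSquare (mul_ne_zero ha0 hb0), map_mul,
    quadraticChar_neg_one_iff_not_isSquare.2 ha, quadraticChar_neg_one_iff_not_isSquare.2 hb]
  norm_num

/-- The prime `q ≡ 5 (mod 8)`: since `2` and `p` are both nonresidues modulo `q`, their product is a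
residue. -/
theorem exists_prime_one {p : ℕ} [hp : Fact p.Prime] (hp8 : p % 8 = 1) :
    ∃ q a b n : ℤ, a ^ 2 + b ^ 2 = q ∧ IsCoprime q (2 * 2 * p) ∧ q ∣ 2 * n ^ 2 - p ∧
      ¬ IsSquare (q : ZMod p) := by
  obtain ⟨q, hq, hq8, h1, h2⟩ := exists_prime_nonresidue hp8 (a := 5) (by norm_num)
  have : Fact q.Prime := ⟨hq⟩
  have hq2 : q ≠ 2 := by rintro rfl; omega
  obtain ⟨a, b, hab⟩ := Nat.Prime.sq_add_sq (p := q) (by omega)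
  have hpq : q ≠ p := by rintro rfl; omega
  have h22 : ¬ IsSquare (2 : ZMod q) := by rw [ZMod.exists_sq_eq_two_iff hq2]; omega
  have h20 : (2 : ZMod q) ≠ 0 := fun h => h22 (h ▸ by simp)
  obtain ⟨y, hy⟩ := isSquare_mul_of_not h22 h2
  refine ⟨q, a, b, (y / 2).val, by exact_mod_cast hab, isCoprime_four_mul hp.out hq hq2 hpq, ?_,
    by simpa using h1⟩
  rw [← ZMod.intCast_zmod_eq_zero_iff_dvd]
  push_cast
  rw [ZMod.natCast_zmod_val]
  field_simp
  linear_combination -hy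

/-- The prime `q ≡ 3 (mod 8)`: since `-1` and `p` are both nonresidues modulo `q`, their product is a
residue. -/
theorem exists_prime_two {p : ℕ} [hp : Fact p.Prime] (hp8 : p % 8 = 1) :
    ∃ q a b n : ℤ, a ^ 2 + 2 * b ^ 2 = q ∧ IsCoprime q (2 * 2 * p) ∧ q ∣ - n ^ 2 - p ∧
      ¬ IsSquare (q : ZMod p) := by
  obtain ⟨q, hq, hq8, h1, h2⟩ := exists_prime_nonresidue hp8 (a := 3) (by norm_num)
  have : Fact q.Prime := ⟨hq⟩
  have hq2 : q ≠ 2 := by rintro rfl; omega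
  have hpq : q ≠ p := by rintro rfl; omega
  have h22 : ¬ IsSquare (-1 : ZMod q) := by rw [ZMod.exists_sq_eq_neg_one_iff]; omega
  obtain ⟨c, hc⟩ := (ZMod.exists_sq_eq_neg_two_iff hq2).2 (by omega)
  obtain ⟨a, b, hab⟩ := exists_sq_add_two_sq hq hc.symm
  obtain ⟨y, hy⟩ := isSquare_mul_of_not h22 h2
  refine ⟨q, a, b, y.val, hab, isCoprime_four_mul hp.out hq hq2 hpq, ?_, by simpa using h1⟩
  rw [← ZMod.intCast_zmod_eq_zero_iff_dvd]
  push_cast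
  rw [ZMod.natCast_zmod_val]
  linear_combination hy

/-! ### Biquadratic symbols and eighth roots of unity modulo `p` -/

theorem exists_pow_four_eq_neg_one {p : ℕ} [hp : Fact p.Prime] (hp8 : p % 8 = 1) :
    ∃ g : ZMod p, g ^ 4 = -1 := by
  have hp2 : p ≠ 2 := by rintro rfl; omega
  obtain ⟨r, hr⟩ := FiniteField.exists_nonsquare (F := ZMod p) (by rwa [ZMod.ringChar_zmod_n])
  have hr0 : r ≠ 0 := by rintro rfl; exact hr (by simp)
  refine ⟨r ^ (p / 8), ?_⟩
  rw [← pow_mul]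
  have h1 := ZMod.pow_div_two_eq_neg_one_or_one p hr0
  rw [show p / 8 * 4 = p / 2 by omega]
  rcases h1 with h | h
  · exact absurd ((ZMod.euler_criterion p hr0).2 h) hr
  · exact h

theorem isSquare_mul_iff_of_isSquare {F : Type*} [Field F] {a b : F} (ha : IsSquare a) (ha0 : a ≠ 0) :
    IsSquare (a * b) ↔ IsSquare b := by
  refine ⟨fun h => ?_, fun h => ha.mul h⟩
  have := h.div ha
  rwa [mul_div_cancel_left₀ _ ha0] at this

section
variable {p : ℕ} [hp : Fact p.Prime] {g : ZMod p}

theorem ne_zero_of_pow_four (hg : g ^ 4 = -1) : g ≠ 0 := by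
  rintro rfl
  simp at hg

theorem two_ne_zero_zmod (hp8 : p % 8 = 1) : (2 : ZMod p) ≠ 0 := by
  intro h
  have h1 : ((2 : ℕ) : ZMod p) = 0 := by exact_mod_cast h
  rw [ZMod.natCast_eq_zero_iff] at h1
  have := Nat.le_of_dvd (by norm_num) h1
  have := hp.out.two_le
  omega

/-- For an eighth root of unity `g` modulo `p`, `(g/p) = (p/2)₄`. -/
theorem isSquare_root_iff (hp8 : p % 8 = 1) (hg : g ^ 4 = -1) :
    IsSquare g ↔ (-1 : ℤ) ^ ((p - 1) / 8) = 1 := by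
  have h2 := two_ne_zero_zmod hp8
  rw [ZMod.euler_criterion p (ne_zero_of_pow_four hg),
    show p / 2 = 4 * ((p - 1) / 8) by omega, pow_mul, hg]
  rcases Nat.even_or_odd ((p - 1) / 8) with h | h
  · simp [h.neg_one_pow]
  · rw [h.neg_one_pow, h.neg_one_pow]
    refine iff_of_false (fun h => h2 ?_) (by norm_num)
    linear_combination -h

theorem sqrt_two_sq (hg : g ^ 4 = -1) : (g - g ^ 3) ^ 2 = 2 := by
  linear_combination (g ^ 2 - 2) * hg

/-- The quadratic character of `√2 = g - g³` modulo `p` is `(2/p)₄`. -/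
theorem isSquare_sqrt_two_iff (hp8 : p % 8 = 1) (hg : g ^ 4 = -1) :
    IsSquare (g - g ^ 3) ↔ (2 : ZMod p) ^ ((p - 1) / 4) = 1 := by
  have h2 := two_ne_zero_zmod hp8
  have h := sqrt_two_sq hg
  have hr : g - g ^ 3 ≠ 0 := by
    intro h0; rw [h0] at h; exact h2 (by rw [← h]; simp)
  rw [ZMod.euler_criterion p hr, show p / 2 = 2 * ((p - 1) / 4) by omega, pow_mul, h]

/-- The condition on the biquadratic symbols says that the images modulo `p` of `ζ₈` and of the
fundamental unit `1 + √2` are squares. This rests on the identity `g √2 (1 + √2) = (1 + g)²`. -/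
theorem biquadratic_iff (hp8 : p % 8 = 1) (hg : g ^ 4 = -1) :
    ((2 : ZMod p) ^ ((p - 1) / 4) = 1 ∧ (-1 : ℤ) ^ ((p - 1) / 8) = 1) ↔
    IsSquare g ∧ IsSquare (1 + g - g ^ 3) := by
  rw [← isSquare_root_iff hp8 hg, ← isSquare_sqrt_two_iff hp8 hg, and_comm]
  refine and_congr_right fun hs => ?_
  have h2 := two_ne_zero_zmod hp8
  have h := sqrt_two_sq hg
  have hr : g - g ^ 3 ≠ 0 := by
    intro h0; rw [h0] at h; exact h2 (by rw [← h]; simp)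
  have key : g * ((g - g ^ 3) * (1 + g - g ^ 3)) = (1 + g) * (1 + g) := by
    linear_combination (g ^ 3 - 2 * g - 1) * hg
  have key' : IsSquare ((g - g ^ 3) * (1 + g - g ^ 3)) := by
    rw [← isSquare_mul_iff_of_isSquare hs (ne_zero_of_pow_four hg), key]
    exact ⟨_, rfl⟩
  constructor
  · intro h; rwa [isSquare_mul_iff_of_isSquare h hr] at key'
  · intro h'
    rw [mul_comm, isSquare_mul_iff_of_isSquare h'] at key'
    · exact key'
    · intro h0
      have : (g - g ^ 3) ^ 2 = 1 := by
        rw [show g - g ^ 3 = -1 by linear_combination h0]; ring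
      rw [h] at this
      exact one_ne_zero (by linear_combination this : (1 : ZMod p) = 0)
end

/-! ### Squares in finitely generated abelian groups -/

open Module in
theorem int_rank_nullity {M N : Type*} [AddCommGroup M] [AddCommGroup N] [Module.Finite ℤ M]
    (f : M →ₗ[ℤ] N) : finrank ℤ (LinearMap.range f) + finrank ℤ (LinearMap.ker f) = finrank ℤ M := by
  rw [← (LinearMap.ker f).finrank_quotient_add_finrank, f.quotKerEquivRange.finrank_eq]

open Module in
theorem index_range_two_nsmul_aux {A L T : Type*} [AddCommGroup A] [AddCommGroup L] [AddCommGroup T]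
    [Finite T] [Module.Free ℤ L] [Module.Finite ℤ L] (f : A ≃+ L × T) :
    (nsmulAddMonoidHom 2 : A →+ A).range.index =
      2 ^ finrank ℤ A * Nat.card (nsmulAddMonoidHom 2 : A →+ A).ker := by
  have h1 : (nsmulAddMonoidHom 2 : A →+ A).range.index =
      (nsmulAddMonoidHom 2 : L × T →+ L × T).range.index := by
    rw [← AddSubgroup.index_map_equiv _ f, AddEquiv.map_range_nsmulAddMonoidHom]
  have h2 : (nsmulAddMonoidHom 2 : L × T →+ L × T).range =
      (nsmulAddMonoidHom 2 : L →+ L).range.prod (nsmulAddMonoidHom 2 : T →+ T).range := by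
    ext ⟨a, b⟩
    simp [AddSubgroup.mem_prod, Prod.ext_iff]
  have h3 : finrank ℤ A = finrank ℤ L := by
    rw [f.toIntLinearEquiv.finrank_eq, ← int_rank_nullity (LinearMap.fst ℤ L T),
      LinearMap.range_eq_top.2 Prod.fst_surjective, finrank_top, Nat.add_eq_left]
    refine Module.IsTorsion.finrank_eq_zero ?_
    rintro ⟨⟨a, t⟩, ha⟩
    obtain rfl : a = 0 := ha
    refine ⟨⟨addOrderOf t, ?_⟩, ?_⟩
    · simp [addOrderOf_eq_zero_iff, isOfFinAddOrder_of_finite]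
    · ext <;> simp [Submonoid.mk_smul, addOrderOf_nsmul_eq_zero]
  have h4 : Nat.card (nsmulAddMonoidHom 2 : A →+ A).ker = Nat.card (nsmulAddMonoidHom 2 : T →+ T).ker := by
    refine Nat.card_congr (Equiv.ofBijective
      (fun a => ⟨(f a).2, ?_⟩) ⟨?_, ?_⟩)
    · have := congrArg Prod.snd (congrArg f a.2)
      simpa [AddMonoidHom.mem_ker] using this
    · intro a b h
      have hz : ∀ c : (nsmulAddMonoidHom 2 : A →+ A).ker, (f c).1 = 0 := by
        intro c
        have := congrArg Prod.fst (congrArg f c.2)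
        rw [nsmulAddMonoidHom_apply, map_nsmul, map_zero, Prod.smul_fst, Prod.fst_zero] at this
        have h0 : (2 : ℤ) • (f c).1 = 0 := by rw [← this]; norm_cast
        exact (smul_eq_zero.1 h0).resolve_left (by norm_num)
      exact Subtype.ext (f.injective (Prod.ext ((hz a).trans (hz b).symm) (Subtype.ext_iff.1 h)))
    · intro t
      refine ⟨⟨f.symm (0, t), ?_⟩, ?_⟩
      · have := t.2
        rw [AddMonoidHom.mem_ker, nsmulAddMonoidHom_apply] at this ⊢
        rw [← map_nsmul, Prod.smul_mk, this]; simp [← Prod.zero_eq_mk]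
      · simp
  rw [h1, h2, AddSubgroup.index_prod, AddSubgroup.index_range_nsmul, h3, h4, AddSubgroup.index_range]

open Module in
/-- By the structure theorem, the index of `2A` is `2 ^ rank A` times the order of the two-torsion
of `A`. -/
theorem index_range_two_nsmul (A : Type*) [AddCommGroup A] [AddGroup.FG A] :
    (nsmulAddMonoidHom 2 : A →+ A).range.index =
      2 ^ finrank ℤ A * Nat.card (nsmulAddMonoidHom 2 : A →+ A).ker := by
  obtain ⟨n, ι, _, p, hp, e, ⟨f⟩⟩ := AddCommGroup.equiv_free_prod_directSum_zmod A
  have : ∀ i, NeZero (p i ^ e i) := fun i => ⟨pow_ne_zero _ (hp i).ne_zero⟩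
  have hfin : Finite (DirectSum ι fun i => ZMod (p i ^ e i)) :=
    Finite.of_equiv _ (DirectSum.addEquivProd (fun i => ZMod (p i ^ e i))).symm.toEquiv
  exact index_range_two_nsmul_aux f

open Module in
/-- If a finitely generated abelian group of rank `n` has exactly two elements with square `1`, then
its squares have index `2 ^ (n + 1)`. -/
theorem index_range_sq {A : Type*} [CommGroup A] [Group.FG A] {n : ℕ}
    (hn : finrank ℤ (Additive A) = n)
    (h2 : Nat.card (powMonoidHom 2 : A →* A).ker = 2) :
    (powMonoidHom 2 : A →* A).range.index = 2 ^ (n + 1) := by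
  rw [pow_succ, ← hn]
  nth_rw 3 [← h2]
  exact index_range_two_nsmul (Additive A)

open Module in
/-- Ranks are additive for a homomorphism that need not be surjective, but whose image contains all
squares. -/
theorem finrank_ker_of_sq {A B : Type*} [CommGroup A] [CommGroup B] [Group.FG A] [Group.FG B]
    (f : A →* B) (hf : ∀ b : B, b ^ 2 ∈ f.range) :
    finrank ℤ (Additive f.ker) + finrank ℤ (Additive B) = finrank ℤ (Additive A) := by
  have hA : Module.Finite ℤ (Additive A) := Module.Finite.iff_addGroup_fg.2 inferInstance
  have hB : Module.Finite ℤ (Additive B) := Module.Finite.iff_addGroup_fg.2 inferInstance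
  set F : Additive A →ₗ[ℤ] Additive B := (MonoidHom.toAdditive f).toIntLinearMap with hF
  have h1 := int_rank_nullity F
  have h2 : finrank ℤ (LinearMap.ker F) = finrank ℤ (Additive f.ker) := by
    refine LinearEquiv.finrank_eq (AddEquiv.toIntLinearEquiv ?_)
    exact
      { toFun := fun a => Additive.ofMul ⟨a.1.toMul, a.2⟩
        invFun := fun a => ⟨Additive.ofMul a.toMul.1, a.toMul.2⟩
        left_inv := fun _ => rfl
        right_inv := fun _ => rfl
        map_add' := fun _ _ => rfl }
  have h3 : finrank ℤ (LinearMap.range F) = finrank ℤ (Additive B) := by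
    refine le_antisymm (Submodule.finrank_le _) ?_
    let d : Additive B →ₗ[ℤ] Additive B := LinearMap.lsmul ℤ (Additive B) 2
    have hd : finrank ℤ (LinearMap.ker d) = 0 := by
      refine Module.IsTorsion.finrank_eq_zero ?_
      rintro ⟨a, ha⟩
      exact ⟨⟨2, by simp⟩, Subtype.ext ha⟩
    have h4 := int_rank_nullity d
    rw [hd, add_zero] at h4
    rw [← h4]
    refine Submodule.finrank_mono ?_
    rintro _ ⟨b, rfl⟩
    obtain ⟨a, ha⟩ := hf b.toMul
    refine ⟨Additive.ofMul a, ?_⟩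
    change Additive.ofMul (f a) = _
    rw [ha]
    change _ = (2 : ℤ) • b
    rw [ofMul_pow, ofMul_toMul]
    norm_cast
  omega

theorem card_ker_sq_units (A : Type*) [CommRing A] [IsDomain A] (h : (-1 : A) ≠ 1)
    (H : Subgroup Aˣ) (hH : -1 ∈ H) : Nat.card (powMonoidHom 2 : H →* H).ker = 2 := by
  have : Nat.card (powMonoidHom 2 : H →* H).ker = Nat.card ({1, -1} : Set Aˣ) := by
    refine Nat.card_congr (Equiv.ofBijective (fun a => ⟨a.1.1, ?_⟩) ⟨?_, ?_⟩)
    · have := a.2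
      rw [MonoidHom.mem_ker, powMonoidHom_apply, Subtype.ext_iff, Units.ext_iff] at this
      have h3 : ((a.1.1 : Aˣ) : A) ^ 2 = 1 := this
      rcases sq_eq_one_iff.1 h3 with h | h
      · left; ext; exact h
      · right; ext; exact h
    · intro a b h
      exact Subtype.ext (Subtype.ext (congrArg (fun z => z.1) h))
    · rintro ⟨a, rfl | rfl⟩
      · exact ⟨1, rfl⟩
      · exact ⟨⟨⟨-1, hH⟩, by rw [MonoidHom.mem_ker]; ext; simp⟩, rfl⟩
  rw [this, Nat.card_coe_set_eq, Set.ncard_pair]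
  intro h'
  exact h (Units.ext_iff.1 h').symm

/-! ### The ring `ℤ[ζ₈]` and its units -/

/-- The ring of integers of `ℚ(ζ₈)` is principal: the Minkowski bound is less than `3`, and the only
prime above `2` is `(ζ₈ - 1)`. -/
theorem eight_pid (K : Type*) [Field K] [NumberField K]
    [hK : IsCyclotomicExtension {2 ^ (2 + 1)} ℚ K] :
    IsPrincipalIdealRing (𝓞 K) := by
  have : Fact (Nat.Prime 2) := ⟨Nat.prime_two⟩
  have hfr : Module.finrank ℚ K = 4 := by
    rw [IsCyclotomicExtension.Rat.finrank (2 ^ (2 + 1)) K]; decide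
  have hd : discr K = 256 := by
    rw [IsCyclotomicExtension.Rat.discr_prime_pow_succ 2 2 K]
    have : Nat.totient (2 ^ (2 + 1)) = 4 := by decide
    norm_num [this]
  have hc : InfinitePlace.nrComplexPlaces K = 2 := by
    rw [IsCyclotomicExtension.Rat.nrComplexPlaces_eq_totient_div_two (2 ^ (2 + 1)) K]; decide
  have hM : ⌊(4 / Real.pi) ^ InfinitePlace.nrComplexPlaces K *
    ((Module.finrank ℚ K).factorial / (Module.finrank ℚ K : ℝ) ^ (Module.finrank ℚ K) *
      √|(discr K : ℝ)|)⌋₊ ≤ 2 := by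
    rw [hfr, hd, hc]
    refine Nat.le_of_lt_succ ((Nat.floor_lt (by positivity)).2 ?_)
    have h1 : √|((256 : ℤ) : ℝ)| = 16 := by
      rw [show |((256 : ℤ) : ℝ)| = 16 ^ 2 by norm_num]; exact Real.sqrt_sq (by norm_num)
    rw [h1]
    have hpi := Real.pi_gt_three
    rw [div_pow, show (Nat.factorial 4) = 24 from rfl]
    norm_num
    rw [div_mul_eq_mul_div, div_lt_iff₀ (by positivity)]
    nlinarith
  apply RingOfIntegers.isPrincipalIdealRing_of_isPrincipal_of_pow_le_of_mem_primesOver_of_mem_Icc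
  intro p hp hpp P hP _
  have hp2 : p = 2 := le_antisymm ((Finset.mem_Icc.1 hp).2.trans hM) hpp.two_le
  subst hp2
  obtain ⟨hP1, hP2⟩ := hP
  have hζ := IsCyclotomicExtension.zeta_spec (2 ^ (2 + 1)) ℚ K
  have := IsCyclotomicExtension.Rat.eq_span_zeta_sub_one_of_liesOver 2 2 K hζ P
  exact ⟨_, this⟩

/-- Dirichlet's unit theorem for a totally complex field of degree `2m`. -/
theorem finrank_units_of_isTotallyComplex (K : Type*) [Field K] [NumberField K] [IsTotallyComplex K]
    {m : ℕ} (h : Module.finrank ℚ K = 2 * m) :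
    Module.finrank ℤ (Additive (𝓞 K)ˣ) = m - 1 := by
  rw [Units.finrank_eq, Units.rank, InfinitePlace.card_eq_nrRealPlaces_add_nrComplexPlaces]
  have h1 := InfinitePlace.card_add_two_mul_card_eq_rank K
  rw [IsTotallyComplex.nrRealPlaces_eq_zero K] at *
  omega

theorem card_ker_sq_units_top (A : Type*) [CommRing A] [IsDomain A] (h : (-1 : A) ≠ 1) :
    Nat.card (powMonoidHom 2 : Aˣ →* Aˣ).ker = 2 := by
  refine Eq.trans ?_ (card_ker_sq_units A h ⊤ (Subgroup.mem_top _))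
  refine Nat.card_congr ⟨fun x => ⟨⟨x.1, Subgroup.mem_top _⟩, ?_⟩, fun x => ⟨x.1.1, ?_⟩, 
    fun _ => rfl, fun _ => rfl⟩
  · have := x.2
    rw [MonoidHom.mem_ker] at this ⊢
    exact Subtype.ext this
  · have := x.2
    rw [MonoidHom.mem_ker] at this ⊢
    exact congrArg Subtype.val this

section Eight
variable {F : Type*} [Field F] [NumberField F] [IsCyclotomicExtension {2 ^ (2 + 1)} ℚ F]
  {ζ : F} (hζ : IsPrimitiveRoot ζ (2 ^ (2 + 1)))

theorem eight_toInteger_pow (hζ : IsPrimitiveRoot ζ (2 ^ (2 + 1))) : hζ.toInteger ^ 4 = -1 := by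
  have h := hζ.toInteger_isPrimitiveRoot
  have h1 : hζ.toInteger ^ 4 * hζ.toInteger ^ 4 = 1 := by rw [← pow_add]; exact h.pow_eq_one
  rcases mul_self_eq_one_iff.1 h1 with h2 | h2
  · exact absurd h2 (h.pow_ne_one_of_pos_of_lt (by norm_num) (by norm_num))
  · exact h2

/-- For every `g` with `g⁴ = -1` in a commutative ring `k`, there is a ring homomorphism from
`ℤ[ζ₈]` to `k` with `ζ₈ ↦ g`. -/
theorem exists_eight_hom (hζ : IsPrimitiveRoot ζ (2 ^ (2 + 1))) {k : Type*} [CommRing k] (g : k)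
    (hg : g ^ 4 = -1) : ∃ ψ : 𝓞 F →+* k, ψ hζ.toInteger = g := by
  have : Fact (Nat.Prime 2) := ⟨Nat.prime_two⟩
  have hm : minpoly ℤ hζ.toInteger = Polynomial.cyclotomic (2 ^ (2 + 1)) ℤ := by
    rw [Polynomial.cyclotomic_eq_minpoly hζ (by norm_num)]
    exact (minpoly.algebraMap_eq (RingOfIntegers.coe_injective) hζ.toInteger).symm
  have hgen := hζ.integralPowerBasisOfPrimePow_gen
  have hy : Polynomial.aeval g (minpoly ℤ hζ.integralPowerBasisOfPrimePow.gen) = 0 := by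
    rw [hgen, hm, Polynomial.cyclotomic_prime_pow_eq_geom_sum Nat.prime_two]
    simp [Finset.sum_range_succ, hg]
  refine ⟨(hζ.integralPowerBasisOfPrimePow.lift g hy).toRingHom, ?_⟩
  have := hζ.integralPowerBasisOfPrimePow.lift_gen g hy
  rw [hgen] at this
  exact this

theorem eight_finrank : Module.finrank ℚ F = 4 := by
  rw [IsCyclotomicExtension.Rat.finrank (2 ^ (2 + 1)) F]; decide

theorem eight_finrank_units : Module.finrank ℤ (Additive (𝓞 F)ˣ) = 1 := by
  have : IsTotallyComplex F :=
    IsCyclotomicExtension.Rat.isTotallyComplex F (n := 2 ^ (2+1)) (by norm_num)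
  exact finrank_units_of_isTotallyComplex F (m := 2) eight_finrank

theorem eight_index : (powMonoidHom 2 : (𝓞 F)ˣ →* (𝓞 F)ˣ).range.index = 4 := by
  have : Group.FG (𝓞 F)ˣ := Group.fg_iff_monoid_fg.2 inferInstance
  refine index_range_sq eight_finrank_units (card_ker_sq_units_top _ ?_)
  intro h
  have : (2 : 𝓞 F) = 0 := by linear_combination -h
  exact two_ne_zero this

/-- The unit `ζ` of `ℤ[ζ₈]`. -/
def zu (hζ : IsPrimitiveRoot ζ (2 ^ (2 + 1))) : (𝓞 F)ˣ where
  val := hζ.toInteger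
  inv := - hζ.toInteger ^ 3
  val_inv := by linear_combination -eight_toInteger_pow hζ
  inv_val := by linear_combination -eight_toInteger_pow hζ

/-- The unit `ε = 1 + ζ - ζ³ = 1 + √2` of `ℤ[ζ₈]`. -/
def eu (hζ : IsPrimitiveRoot ζ (2 ^ (2 + 1))) : (𝓞 F)ˣ where
  val := 1 + hζ.toInteger - hζ.toInteger ^ 3
  inv := hζ.toInteger - hζ.toInteger ^ 3 - 1
  val_inv := by linear_combination (hζ.toInteger ^ 2 - 2) * eight_toInteger_pow hζ
  inv_val := by linear_combination (hζ.toInteger ^ 2 - 2) * eight_toInteger_pow hζ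

/-- The units of `ℤ[ζ₈]` are generated by `ζ` and `1 + √2` modulo squares. The four classes are
separated by the quadratic characters modulo a prime above `17` and a prime above `41`. -/
theorem exists_unit_form (u : (𝓞 F)ˣ) :
    ∃ w : (𝓞 F)ˣ, u = w ^ 2 ∨ u = zu hζ * w ^ 2 ∨ u = eu hζ * w ^ 2 ∨ u = zu hζ * eu hζ * w ^ 2 := by
  set H := (powMonoidHom 2 : (𝓞 F)ˣ →* (𝓞 F)ˣ).range with hH
  have hidx : Nat.card ((𝓞 F)ˣ ⧸ H) = 4 := eight_index
  have hfin : Finite ((𝓞 F)ˣ ⧸ H) := Nat.finite_of_card_ne_zero (by omega)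
  let f : Fin 4 → (𝓞 F)ˣ := ![1, zu hζ, eu hζ, zu hζ * eu hζ]
  obtain ⟨ψ, hψ⟩ := exists_eight_hom hζ (2 : ZMod 17) (by decide)
  obtain ⟨φ, hφ⟩ := exists_eight_hom hζ (3 : ZMod 41) (by decide)
  have key : ∀ {k : Type} [CommRing k] (χ : 𝓞 F →+* k) (a b : (𝓞 F)ˣ),
      (QuotientGroup.mk a : (𝓞 F)ˣ ⧸ H) = QuotientGroup.mk b →
      IsSquare (χ a) → IsSquare (χ b) := by
    intro k _ χ a b hab ha
    obtain ⟨w, hw⟩ := QuotientGroup.eq.1 hab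
    have : b = a * w ^ 2 := by rw [← powMonoidHom_apply, hw]; group
    rw [this]
    push_cast
    rw [map_mul, map_pow]
    exact ha.mul (IsSquare.sq _)
  have hz1 : ψ (zu hζ : 𝓞 F) = 2 := hψ
  have hz2 : φ (zu hζ : 𝓞 F) = 3 := hφ
  have he1 : ψ (eu hζ : 𝓞 F) = 1 + 2 - 2 ^ 3 := by simp [eu, hψ]
  have he2 : φ (eu hζ : 𝓞 F) = 1 + 3 - 3 ^ 3 := by simp [eu, hφ]
  have hinj : Function.Injective (fun i => (QuotientGroup.mk (f i) : (𝓞 F)ˣ ⧸ H)) := by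
    have h1 : ∀ i : Fin 4, ψ (f i : 𝓞 F) = ![1, 2, 1 + 2 - 2 ^ 3, 2 * (1 + 2 - 2 ^ 3)] i := by
      intro i; fin_cases i <;> simp [f, hz1, he1]
    have h2 : ∀ i : Fin 4, φ (f i : 𝓞 F) = ![1, 3, 1 + 3 - 3 ^ 3, 3 * (1 + 3 - 3 ^ 3)] i := by
      intro i; fin_cases i <;> simp [f, hz2, he2]
    intro i j hij
    have e1 := key ψ _ _ hij
    have e2 := key ψ _ _ hij.symm
    have e3 := key φ _ _ hij
    have e4 := key φ _ _ hij.symm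
    rw [h1, h1] at e1 e2
    rw [h2, h2] at e3 e4
    clear hij h1 h2
    revert i j
    decide +kernel
  have hbij := (Nat.bijective_iff_injective_and_card
    (fun i => (QuotientGroup.mk (f i) : (𝓞 F)ˣ ⧸ H))).2 ⟨hinj, by simp [hidx]⟩
  obtain ⟨i, hi⟩ := hbij.2 (QuotientGroup.mk u)
  obtain ⟨w, hw⟩ := QuotientGroup.eq.1 hi
  have hu : u = f i * w ^ 2 := by rw [← powMonoidHom_apply, hw]; group
  refine ⟨w, ?_⟩
  fin_cases i
  · left; simpa [f] using hu
  · right; left; simpa [f] using hu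
  · right; right; left; simpa [f] using hu
  · right; right; right; simpa [f] using hu

/-- If the images of `ζ` and of `1 + √2` under a multiplicative map are squares, then the image
of every unit is. -/
theorem isSquare_unit {k : Type*} [CommRing k] (ψ : 𝓞 F →* k)
    (h1 : IsSquare (ψ hζ.toInteger)) (h2 : IsSquare (ψ (1 + hζ.toInteger - hζ.toInteger ^ 3)))
    (u : (𝓞 F)ˣ) : IsSquare (ψ u) := by
  have h1 : IsSquare (ψ (zu hζ : 𝓞 F)) := h1
  have h2 : IsSquare (ψ (eu hζ : 𝓞 F)) := h2
  obtain ⟨w, h | h | h | h⟩ := exists_unit_form hζ u <;> rw [h] <;> push_cast <;>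
    simp only [map_mul, map_pow]
  · exact IsSquare.sq _
  · exact h1.mul (IsSquare.sq _)
  · exact h2.mul (IsSquare.sq _)
  · exact (h1.mul h2).mul (IsSquare.sq _)

end Eight

/-! ### Primes above `p` -/

section Split
variable {R : Type*} [CommRing R] {p : ℕ} [Fact p.Prime] {ζ : R}
  {G : Fin 4 → ZMod p} {ψ : Fin 4 → R →+* ZMod p}

/-- If `R = ℤ[ζ]` with `ζ` of degree four, and `ψ i : R → 𝔽_p` are four homomorphisms with
different values at `ζ`, then their kernels intersect in `(p)`. -/
theorem dvd_of_split (hR : ∀ f : R, ∃ P : Polynomial ℤ, P.degree < 4 ∧ Polynomial.aeval ζ P = f)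
    (hG : Function.Injective G) (hψ : ∀ i, ψ i ζ = G i) {f : R} (hf : ∀ i, ψ i f = 0) :
    (p : R) ∣ f := by
  obtain ⟨P, hP, rfl⟩ := hR f
  have h0 : P.map (Int.castRingHom (ZMod p)) = 0 := by
    refine Polynomial.eq_zero_of_degree_lt_of_eval_index_eq_zero (s := Finset.univ) (v := G)
      (fun i _ j _ h => hG h) ?_ ?_
    · exact lt_of_le_of_lt Polynomial.degree_map_le (by simpa using hP)
    · intro i _
      have := hf i
      rw [Polynomial.aeval_def, Polynomial.hom_eval₂, hψ] at this
      rw [Polynomial.eval_map, ← this]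
      congr 1
      exact RingHom.ext_int _ _
  have h1 : Polynomial.C (p : ℤ) ∣ P := by
    rw [Polynomial.C_dvd_iff_dvd_coeff]
    intro i
    rw [← ZMod.intCast_zmod_eq_zero_iff_dvd]
    have := congrArg (fun Q => Q.coeff i) h0
    simpa using this
  obtain ⟨Q, rfl⟩ := h1
  rw [map_mul]
  exact Dvd.intro (Polynomial.aeval ζ Q) (by simp)

/-- Since `p` splits completely in `R`, the ideal `(p)` is radical. -/
theorem dvd_of_dvd_sq (hR : ∀ f : R, ∃ P : Polynomial ℤ, P.degree < 4 ∧ Polynomial.aeval ζ P = f)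
    (hG : Function.Injective G) (hψ : ∀ i, ψ i ζ = G i) {f : R} (hf : (p : R) ∣ f * f) :
    (p : R) ∣ f := by
  refine dvd_of_split hR hG hψ (fun i => ?_)
  obtain ⟨c, hc⟩ := hf
  have := congrArg (ψ i) hc
  rw [map_mul, map_mul, map_natCast, ZMod.natCast_self, zero_mul] at this
  exact mul_self_eq_zero.1 this

/-- Modulo an ideal containing `ζ - m` every element of `R = ℤ[ζ]` is congruent to an integer, whose
residue modulo `p` is the value of the homomorphism with `ζ ↦ m`. -/
theorem exists_int_sub_mem
    (hR : ∀ f : R, ∃ P : Polynomial ℤ, P.degree < 4 ∧ Polynomial.aeval ζ P = f)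
    {ψ : R →+* ZMod p} {m : ℤ} (hm : ψ ζ = m)
    {q : Ideal R} (hz : ζ - (m : R) ∈ q) (r : R) : ∃ n : ℤ, r - (n : R) ∈ q ∧ ψ r = n := by
  obtain ⟨P, -, rfl⟩ := hR r
  refine ⟨P.eval m, ?_, ?_⟩
  · have h1 : ((P.eval m : ℤ) : R) = Polynomial.aeval (m : R) P := by
      have := Polynomial.aeval_algebraMap_apply R m P
      simpa using this.symm
    rw [h1]
    refine q.mem_of_dvd ?_ hz
    rw [Polynomial.aeval_def, Polynomial.aeval_def, ← Polynomial.eval_map, ← Polynomial.eval_map]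
    exact Polynomial.sub_dvd_eval_sub _ _ _
  · rw [Polynomial.aeval_def, Polynomial.hom_eval₂, hm]
    have h := Polynomial.hom_eval₂ P (RingHom.id ℤ) (Int.castRingHom (ZMod p)) m
    rw [Polynomial.eval₂_id] at h
    rw [← eq_intCast (Int.castRingHom (ZMod p)) (P.eval m), h]
    congr 1
    exact RingHom.ext_int _ _

theorem natCast_dvd_of_mem {q : Ideal R} (hq : q ≠ ⊤) (hp : (p : R) ∈ q) {n : ℤ} (hn : (n : R) ∈ q) :
    (p : ℤ) ∣ n := by
  by_contra h
  have hc : IsCoprime (p : ℤ) n :=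
    (Nat.prime_iff_prime_int.1 (Fact.out : p.Prime)).coprime_iff_not_dvd.2 h
  obtain ⟨a, b, hab⟩ := hc
  refine hq ((Ideal.eq_top_iff_one _).2 ?_)
  have := congrArg (Int.cast : ℤ → R) hab
  push_cast at this
  rw [← this]
  exact q.add_mem (q.mul_mem_left _ hp) (q.mul_mem_left _ hn)

/-- A prime containing `p` is the kernel of one of the four homomorphisms. -/
theorem exists_eq_ker_of_split
    (hR : ∀ f : R, ∃ P : Polynomial ℤ, P.degree < 4 ∧ Polynomial.aeval ζ P = f)
    (hG : Function.Injective G) (hψ : ∀ i, ψ i ζ = G i) {q : Ideal R} (hq : q.IsPrime)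
    (hp : (p : R) ∈ q) : ∃ i, ∀ r, r ∈ q ↔ ψ i r = 0 := by
  have h1 : (p : R) ∣ ∏ i, (ζ - ((G i).val : R)) := by
    refine dvd_of_split hR hG hψ (fun i => ?_)
    rw [map_prod]
    refine Finset.prod_eq_zero (Finset.mem_univ i) ?_
    rw [map_sub, hψ, map_natCast, ZMod.natCast_zmod_val, sub_self]
  obtain ⟨i, -, hi⟩ := (Ideal.IsPrime.prod_mem_iff (hp := hq)).1 (q.mem_of_dvd h1 hp)
  refine ⟨i, fun r => ?_⟩
  obtain ⟨n, hn, hn'⟩ := exists_int_sub_mem hR (ψ := ψ i) (m := ((G i).val : ℤ))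
    (by rw [hψ]; simp) (q := q) (by simpa using hi) r
  rw [hn', ZMod.intCast_zmod_eq_zero_iff_dvd]
  constructor
  · intro hr
    refine natCast_dvd_of_mem hq.ne_top hp ?_
    have := q.sub_mem hr hn
    simpa using this
  · rintro ⟨c, rfl⟩
    have : r = (r - ((p * c : ℤ) : R)) + (c : R) * p := by push_cast; ring
    rw [this]
    exact q.add_mem hn (q.mul_mem_left _ hp)

end Split

namespace QuadSetup
variable {R S : Type*} [CommRing R] [CommRing S] [IsDomain S] [Algebra R S] [FaithfulSMul R S]
  (D : QuadSetup R S) {p : ℕ} [Fact p.Prime] {ζ : R}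
  {G : Fin 4 → ZMod p} {ψ : Fin 4 → R →+* ZMod p}

/-- The different of `S` over `R` is generated by `√p`. -/
theorem sub_τ_dvd (hs : D.s * D.s = algebraMap R S p)
    (hR : ∀ f : R, ∃ P : Polynomial ℤ, P.degree < 4 ∧ Polynomial.aeval ζ P = f)
    (hG : Function.Injective G) (hψ : ∀ i, ψ i ζ = G i) (y : S) : D.s ∣ y - D.τ y := by
  set d := y - D.τ y with hd
  have hτd : D.τ d = -d := by rw [hd, map_sub, D.invol]; ring
  obtain ⟨f, hf⟩ := D.fixed (d * D.s) (by rw [map_mul, hτd, D.τ_s]; ring)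
  obtain ⟨e, he⟩ := D.fixed (d * d) (by rw [map_mul, hτd]; ring)
  have h1 : f * f = p * e := by
    apply FaithfulSMul.algebraMap_injective R S
    rw [map_mul, map_mul, hf, he, ← hs]; ring
  obtain ⟨b, hb⟩ := dvd_of_dvd_sq hR hG hψ (Dvd.intro _ h1.symm)
  refine ⟨algebraMap R S b, ?_⟩
  apply mul_right_cancel₀ D.s_ne
  rw [← hf, hb, map_mul, ← hs]; ring

/-- Modulo an ideal containing `√p`, every element of `S` is congruent to an element of `R`, and `τ`
acts trivially. -/
theorem residue (hs : D.s * D.s = algebraMap R S p) (hp2 : p ≠ 2)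
    (hR : ∀ f : R, ∃ P : Polynomial ℤ, P.degree < 4 ∧ Polynomial.aeval ζ P = f)
    (hG : Function.Injective G) (hψ : ∀ i, ψ i ζ = G i) {Q : Ideal S} (hQ : D.s ∈ Q) (y : S) :
    ∃ r : R, y - algebraMap R S r ∈ Q ∧ D.τ y - algebraMap R S r ∈ Q := by
  obtain ⟨k, hk⟩ := (Fact.out : p.Prime).odd_of_ne_two hp2
  obtain ⟨t, ht⟩ := D.fixed (y + D.τ y) (by rw [map_add, D.invol]; ring)
  obtain ⟨b, hb⟩ := D.sub_τ_dvd hs hR hG hψ y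
  have hpQ : (p : S) ∈ Q := by
    rw [← map_natCast (algebraMap R S), ← hs]; exact Q.mul_mem_left _ hQ
  have hk' : (p : S) = 2 * k + 1 := by rw [hk]; push_cast; ring
  -- `k + 1` is the inverse of `2` modulo `p = 2 * k + 1`, and `2 y ≡ y + τ y = t`
  refine ⟨(k + 1) * t, ?_, ?_⟩
  · have : y - algebraMap R S ((k + 1) * t) = (k + 1) * b * D.s - y * p := by
      rw [map_mul, ht, hk', map_add, map_natCast, map_one]
      linear_combination (k + 1) * hb
    rw [this]
    exact Q.sub_mem (Q.mul_mem_left _ hQ) (Q.mul_mem_left _ hpQ)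
  · have : D.τ y - algebraMap R S ((k + 1) * t) = - (k + 1) * b * D.s - D.τ y * p := by
      rw [map_mul, ht, hk', map_add, map_natCast, map_one]
      linear_combination -(k + 1) * hb
    rw [this]
    exact Q.sub_mem (Q.mul_mem_left _ hQ) (Q.mul_mem_left _ hpQ)

/-- The four primes of `S` over `p`. They are ramified over `R`, have residue field `𝔽_p`, and
are the only primes that contain `√p`. -/
theorem exists_ram [Algebra.IsIntegral R S] (hs : D.s * D.s = algebraMap R S p) (hp2 : p ≠ 2)
    (hR : ∀ f : R, ∃ P : Polynomial ℤ, P.degree < 4 ∧ Polynomial.aeval ζ P = f)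
    (hG : Function.Injective G) (hψ : ∀ i, ψ i ζ = G i) :
    ∃ T : D.Ram (Fin 4), ∀ i, (∀ r, algebraMap R S r ∈ T.P i ↔ ψ i r = 0) ∧
      ∀ y, ∃ r, y - algebraMap R S r ∈ T.P i := by
  have hex : ∀ i, ∃ Q : Ideal S, Q.IsPrime ∧ ∀ r, algebraMap R S r ∈ Q ↔ ψ i r = 0 := by
    intro i
    have hk : (RingHom.ker (ψ i)).IsPrime := RingHom.ker_isPrime _
    obtain ⟨Q, -, hQ, hQ'⟩ := Ideal.exists_ideal_over_prime_of_isIntegral (RingHom.ker (ψ i))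
      (⊥ : Ideal S) (by
        rw [← RingHom.ker_eq_comap_bot,
          (RingHom.injective_iff_ker_eq_bot _).1 (FaithfulSMul.algebraMap_injective R S)]
        exact bot_le)
    refine ⟨Q, hQ, fun r => ?_⟩
    rw [← Ideal.mem_comap, hQ', RingHom.mem_ker]
  choose Q hQ hQ' using hex
  have hsQ : ∀ i, D.s ∈ Q i := by
    intro i
    have : D.s * D.s ∈ Q i := by rw [hs, hQ']; simp
    exact (or_self_iff.1 ((hQ i).mem_or_mem this))
  have hτ : ∀ i y, y ∈ Q i ↔ D.τ y ∈ Q i := by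
    intro i y
    obtain ⟨r, hr, hr'⟩ := D.residue hs hp2 hR hG hψ (hsQ i) y
    have e1 : y ∈ Q i ↔ algebraMap R S r ∈ Q i :=
      ⟨fun h => by simpa using (Q i).sub_mem h hr, fun h => by simpa using (Q i).add_mem hr h⟩
    have e2 : D.τ y ∈ Q i ↔ algebraMap R S r ∈ Q i :=
      ⟨fun h => by simpa using (Q i).sub_mem h hr', fun h => by simpa using (Q i).add_mem hr' h⟩
    rw [e1, e2]
  refine ⟨⟨Q, hQ, ?_, ?_, ?_⟩, ?_⟩
  · intro i h
    have := hsQ i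
    rw [h] at this
    exact D.s_ne (by simpa using this)
  · intro i
    ext y
    rw [D.mem_cj, ← hτ]
  · intro I hI hsI
    have hpI : (p : R) ∈ I.comap (algebraMap R S) := by
      rw [Ideal.mem_comap, ← hs]; exact I.mul_mem_left _ hsI
    obtain ⟨i, hi⟩ := exists_eq_ker_of_split hR hG hψ (hI.comap (algebraMap R S)) hpI
    refine ⟨i, ?_⟩
    -- both ideals contain `√p`, so every element is congruent to one of `R`
    ext y
    obtain ⟨r, hr, -⟩ := D.residue hs hp2 hR hG hψ
      (Q := I ⊓ Q i) ⟨hsI, hsQ i⟩ y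
    have e1 : y ∈ I ↔ algebraMap R S r ∈ I :=
      ⟨fun h => by simpa using I.sub_mem h hr.1, fun h => by simpa using I.add_mem hr.1 h⟩
    have e2 : y ∈ Q i ↔ algebraMap R S r ∈ Q i :=
      ⟨fun h => by simpa using (Q i).sub_mem h hr.2, fun h => by simpa using (Q i).add_mem hr.2 h⟩
    rw [e1, e2, hQ', ← hi, Ideal.mem_comap]
  · intro i
    refine ⟨hQ' i, fun y => ?_⟩
    obtain ⟨r, hr, -⟩ := D.residue hs hp2 hR hG hψ (hsQ i) y
    exact ⟨r, hr⟩

end QuadSetup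

/-! ### Units of relative norm one -/

theorem group_fg_subgroup {A : Type*} [CommGroup A] [Group.FG A] (H : Subgroup A) : Group.FG H := by
  have hA : Module.Finite ℤ (Additive A) := Module.Finite.iff_addGroup_fg.2 inferInstance
  have h1 : Module.Finite ℤ (AddSubgroup.toIntSubmodule (Subgroup.toAddSubgroup H)) := inferInstance
  have h2 : AddGroup.FG (Additive H) := Module.Finite.iff_addGroup_fg.1 h1
  exact GroupFG.iff_add_fg.2 h2

/-- The subgroup of the units of `R` whose image under `ψ` is a square. -/
def sqUnits {R k : Type*} [CommRing R] [Field k] (ψ : R →+* k) : Subgroup Rˣ where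
  carrier := {u | IsSquare (ψ u)}
  one_mem' := by simp
  mul_mem' := by
    intro a b ha hb
    simp only [Set.mem_ofPred_eq, Units.val_mul, map_mul] at *
    exact ha.mul hb
  inv_mem' := by
    intro a ha
    simp only [Set.mem_ofPred_eq] at *
    have : ψ (a⁻¹ : Rˣ) = (ψ a)⁻¹ := by
      refine eq_inv_of_mul_eq_one_left ?_
      rw [← map_mul, Units.inv_mul, map_one]
    rw [this]
    exact ha.inv

section Roots
variable {p : ℕ} [Fact p.Prime] {g : ZMod p}

theorem roots_injective (hp8 : p % 8 = 1) (hg : g ^ 4 = -1) :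
    Function.Injective (![g, g ^ 3, -g, -g ^ 3] : Fin 4 → ZMod p) := by
  have h2 := two_ne_zero_zmod hp8
  have h0 := ne_zero_of_pow_four hg
  -- a coincidence would give `g⁴ = 1` or `2 = 0`
  have a1 : g ≠ g ^ 3 := by
    intro h
    have h3 : g ^ 2 = 1 := mul_left_cancel₀ h0 (by linear_combination -h)
    exact h2 (by linear_combination (g ^ 2 + 1) * -h3 + hg)
  have a2 : g ≠ - g ^ 3 := by
    intro h
    have h3 : g ^ 2 = -1 := mul_left_cancel₀ h0 (by linear_combination h)
    exact h2 (by linear_combination (g ^ 2 - 1) * -h3 + hg)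
  have a3 : g ≠ -g := by
    intro h
    exact h2 (mul_left_cancel₀ h0 (by linear_combination h))
  have a4 : g ^ 3 ≠ - g ^ 3 := by
    intro h
    exact h2 (mul_left_cancel₀ (pow_ne_zero 3 h0) (by linear_combination h))
  have a5 : -g ≠ g ^ 3 := fun h => a2 (by linear_combination -h)
  intro i j hij
  fin_cases i <;> fin_cases j <;> first | rfl | (exfalso; simp at hij; grind)

end Roots

section Count
variable {F K : Type*} [Field F] [NumberField F] [IsCyclotomicExtension {2 ^ (2 + 1)} ℚ F]
  [Field K] [NumberField K] [Algebra F K]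
  {ζ : F} (hζ : IsPrimitiveRoot ζ (2 ^ (2 + 1)))

theorem eight_exists_poly (f : 𝓞 F) :
    ∃ P : Polynomial ℤ, P.degree < 4 ∧ Polynomial.aeval hζ.toInteger P = f := by
  have : Fact (Nat.Prime 2) := ⟨Nat.prime_two⟩
  obtain ⟨P, h1, h2⟩ := hζ.integralPowerBasisOfPrimePow.exists_eq_aeval f
  rw [hζ.integralPowerBasisOfPrimePow_dim, show Nat.totient (2 ^ (2 + 1)) = 4 by decide] at h1
  rw [hζ.integralPowerBasisOfPrimePow_gen] at h2
  exact ⟨P, lt_of_le_of_lt Polynomial.degree_le_natDegree (by exact_mod_cast h1), h2.symm⟩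

/-- The units of relative norm one have rank two, so their squares have index eight. -/
theorem index_relative_units (D : QuadSetup (𝓞 F) (𝓞 K)) (hK : Module.finrank ℚ K = 8) :
    (powMonoidHom 2 : D.unm.ker →* D.unm.ker).range.index = 8 := by
  have hF : IsTotallyComplex F :=
    IsCyclotomicExtension.Rat.isTotallyComplex F (n := 2 ^ (2+1)) (by norm_num)
  have : IsTotallyComplex K := isTotallyComplex_of_algebra F K
  have i1 : Group.FG (𝓞 F)ˣ := Group.fg_iff_monoid_fg.2 inferInstance
  have i2 : Group.FG (𝓞 K)ˣ := Group.fg_iff_monoid_fg.2 inferInstance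
  have i3 : Group.FG D.unm.ker := group_fg_subgroup _
  have h1 := finrank_units_of_isTotallyComplex K (m := 4) hK
  have h2 : Module.finrank ℤ (Additive (𝓞 F)ˣ) = 1 := eight_finrank_units
  have h3 := finrank_ker_of_sq D.unm (fun b => ⟨_, D.unm_uι b⟩)
  refine index_range_sq (n := 2) (by omega) (card_ker_sq_units _ ?_ _ ?_)
  · intro h
    have : (2 : 𝓞 K) = 0 := by linear_combination -h
    exact two_ne_zero this
  · rw [MonoidHom.mem_ker]
    have : (-1 : (𝓞 K)ˣ) = QuadSetup.uι _ _ (-1 : (𝓞 F)ˣ) := by ext; simp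
    rw [this, D.unm_uι]
    simp

end Count

/-! ### The count of classes modulo squares -/

section Count
variable {F K : Type*} [Field F] [NumberField F] [IsCyclotomicExtension {2 ^ (2 + 1)} ℚ F]
  [Field K] [NumberField K] [Algebra F K]
  {ζ : F} (hζ : IsPrimitiveRoot ζ (2 ^ (2 + 1)))

/-- In a field, a product of a nonsquare and of nonzero squares is not a square. -/
theorem not_isSquare_mul₃ {k : Type*} [Field k] {a b c d : k} (ha : IsSquare a) (ha0 : a ≠ 0)
    (hb : ¬ IsSquare b) (hc : IsSquare c) (hc0 : c ≠ 0) (hd : IsSquare d) (hd0 : d ≠ 0) :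
    ¬ IsSquare (a * (b * c * d)) := by
  rw [isSquare_mul_iff_of_isSquare ha ha0, mul_comm, isSquare_mul_iff_of_isSquare hd hd0, mul_comm,
    isSquare_mul_iff_of_isSquare hc hc0]
  exact hb

/-- If the product of two homomorphisms sends `ζ` and `1 + √2` to squares, then it sends all units
to squares. -/
theorem isSquare_unit_pair {k : Type*} [CommRing k] (ψ φ : 𝓞 F →+* k) {g h : k}
    (hψ : ψ hζ.toInteger = g) (hφ : φ hζ.toInteger = h) (h1 : IsSquare (g * h))
    (h2 : IsSquare ((1 + g - g ^ 3) * (1 + h - h ^ 3))) (u : (𝓞 F)ˣ) : IsSquare (ψ u * φ u) := by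
  refine isSquare_unit hζ ((ψ : 𝓞 F →* k) * (φ : 𝓞 F →* k)) ?_ ?_ u
  · simpa [hψ, hφ] using h1
  · simpa [hψ, hφ] using h2

variable {p : ℕ} [Fact p.Prime] {g : ZMod p}

/-- The order of `Cl/Cl²` in terms of the quadratic characters of `ζ₈` and `1 + √2` modulo a prime
above `p`. Here `g` is the residue of `ζ₈`, so that `1 + g - g³` is the residue of `1 + √2`. -/
theorem card_class_mod_sq (hζ : IsPrimitiveRoot ζ (2 ^ (2 + 1))) (D : QuadSetup (𝓞 F) (𝓞 K))
    (hK : Module.finrank ℚ K = 8)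
    (hs : D.s * D.s = algebraMap (𝓞 F) (𝓞 K) p) (hp8 : p % 8 = 1) (hg : g ^ 4 = -1) :
    4 ≤ Nat.card (ClassGroup (𝓞 K) ⧸
        (powMonoidHom 2 : ClassGroup (𝓞 K) →* ClassGroup (𝓞 K)).range) ∧
    Nat.card (ClassGroup (𝓞 K) ⧸
        (powMonoidHom 2 : ClassGroup (𝓞 K) →* ClassGroup (𝓞 K)).range) ≤ 8 ∧
    (¬ (IsSquare g ∧ IsSquare (1 + g - g ^ 3)) → Nat.card (ClassGroup (𝓞 K) ⧸
        (powMonoidHom 2 : ClassGroup (𝓞 K) →* ClassGroup (𝓞 K)).range) ≤ 4) ∧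
    (IsSquare g ∧ IsSquare (1 + g - g ^ 3) → 8 ≤ Nat.card (ClassGroup (𝓞 K) ⧸
        (powMonoidHom 2 : ClassGroup (𝓞 K) →* ClassGroup (𝓞 K)).range)) := by
  have hPID : IsPrincipalIdealRing (𝓞 F) := eight_pid F
  have hp2 : p ≠ 2 := by rintro rfl; omega
  have hR := eight_exists_poly hζ
  have hG := roots_injective hp8 hg
  have hG4 : ∀ i, (![g, g ^ 3, -g, -g ^ 3] : Fin 4 → ZMod p) i ^ 4 = -1 := by
    intro i
    fin_cases i
    · exact hg
    · change (g ^ 3) ^ 4 = -1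
      linear_combination (g ^ 8 - g ^ 4 + 1) * hg
    · change (-g) ^ 4 = -1
      linear_combination hg
    · change (-g ^ 3) ^ 4 = -1
      linear_combination (g ^ 8 - g ^ 4 + 1) * hg
  choose ψ hψ using fun i => exists_eight_hom hζ _ (hG4 i)
  obtain ⟨T, hT⟩ := D.exists_ram hs hp2 hR hG hψ
  have hsq : ∀ (i : Fin 4) {x : 𝓞 F} {α δ : 𝓞 K}, δ ≠ 0 → D.nm α = x * D.nm δ →
      IsSquare (ψ i x) := fun i x α δ hδ h =>
    D.isSquare_of_nm (ψ i) (T.prime i) (hT i).1 (T.cj_eq i) (hT i).2 hδ h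
  have hz0 : ψ 0 hζ.toInteger = g := hψ 0
  have hz1 : ψ 1 hζ.toInteger = g ^ 3 := hψ 1
  have hz2 : ψ 2 hζ.toInteger = -g := hψ 2
  have hcard : Nat.card (ClassGroup (𝓞 K) ⧸
        (powMonoidHom 2 : ClassGroup (𝓞 K) →* ClassGroup (𝓞 K)).range) =
      Nat.card (powMonoidHom 2 : ClassGroup (𝓞 K) →* ClassGroup (𝓞 K)).ker :=
    Subgroup.index_range
  have h8 := index_relative_units D hK
  have h4 : (powMonoidHom 2 : (𝓞 F)ˣ →* (𝓞 F)ˣ).range.index = 4 := eight_index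
  -- With `i = z²`, `√2 = z - z³` and `√-2 = z + z³`, the elements `x₁ = a₁ + b₁ i` and
  -- `x₂ = a₂ + b₂ √-2` divide `q₁` and `q₂`. They generate norms of ideals because `p` is congruent
  -- to the squares of `n₁ √2` modulo `q₁` and of `n₂ i` modulo `q₂`.
  obtain ⟨q₁, a₁, b₁, n₁, e₁, c₁, d₁, r₁⟩ := exists_prime_one (p := p) hp8
  obtain ⟨q₂, a₂, b₂, n₂, e₂, c₂, d₂, r₂⟩ := exists_prime_two (p := p) hp8
  have z4 := eight_toInteger_pow hζ
  set z := hζ.toInteger with hz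
  set x₁ : 𝓞 F := a₁ + b₁ * z ^ 2 with hx₁
  set x₂ : 𝓞 F := a₂ + b₂ * (z + z ^ 3) with hx₂
  have f₁ : x₁ ∣ (q₁ : 𝓞 F) := ⟨a₁ - b₁ * z ^ 2, by
    rw [← e₁, hx₁]; push_cast; linear_combination (b₁ : 𝓞 F) ^ 2 * z4⟩
  have f₂ : x₂ ∣ (q₂ : 𝓞 F) := ⟨a₂ - b₂ * (z + z ^ 3), by
    rw [← e₂, hx₂]; push_cast; linear_combination (b₂ : 𝓞 F) ^ 2 * (z ^ 2 + 2) * z4⟩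
  have cop : ∀ {q : ℤ} {x : 𝓞 F}, IsCoprime q (2 * 2 * p) → x ∣ (q : 𝓞 F) →
      IsCoprime x (2 * 2 * (p : 𝓞 F)) := by
    intro q x h hx
    have := h.map (Int.castRingHom (𝓞 F))
    simp only [eq_intCast] at this
    simp only [Int.cast_mul, Int.cast_ofNat, Int.cast_natCast] at this
    exact this.of_isCoprime_of_dvd_left hx
  have I₁ := D.exists_of_sq_mod hs (t := n₁ * (z - z ^ 3)) (cop c₁ f₁) (f₁.trans (by
    have := map_dvd (Int.castRingHom (𝓞 F)) d₁
    simp only [eq_intCast] at this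
    push_cast at this
    convert this using 1
    linear_combination (n₁ : 𝓞 F) ^ 2 * (z ^ 2 - 2) * z4))
  have hdvd₂ : (q₂ : 𝓞 F) ∣ n₂ * z ^ 2 * (n₂ * z ^ 2) - p := by
    have := map_dvd (Int.castRingHom (𝓞 F)) d₂
    simp only [eq_intCast] at this
    push_cast at this
    convert this using 1
    linear_combination (n₂ : 𝓞 F) ^ 2 * z4
  have I₂ := D.exists_of_sq_mod hs (cop c₂ f₂) (f₂.trans hdvd₂)
  have I₃ := D.exists_of_sq_mod hs (cop c₂ dvd_rfl) hdvd₂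
  have q₁0 : (q₁ : ZMod p) ≠ 0 := fun h => r₁ (by rw [h]; simp)
  have q₂0 : (q₂ : ZMod p) ≠ 0 := fun h => r₂ (by rw [h]; simp)
  have ψ0 : ∀ {x : 𝓞 F} {q : ℤ}, x ∣ (q : 𝓞 F) → (q : ZMod p) ≠ 0 → ∀ i, ψ i x ≠ 0 := by
    intro x q hx hq i h
    have := map_dvd (ψ i) hx
    rw [h, zero_dvd_iff, map_intCast] at this
    exact hq this
  have y₁ := ψ0 f₁ q₁0
  have y₂ := ψ0 f₂ q₂0
  have n₁0 : x₁ ≠ 0 := by intro h; exact y₁ 0 (by rw [h, map_zero])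
  have n₂0 : x₂ ≠ 0 := by intro h; exact y₂ 0 (by rw [h, map_zero])
  have n₃0 : (q₂ : 𝓞 F) ≠ 0 := by
    intro h; exact ψ0 (dvd_refl (q₂ : 𝓞 F)) q₂0 0 (by rw [h, map_zero])
  have hm1 : IsSquare (-1 : ZMod p) := ⟨g ^ 2, by linear_combination -hg⟩
  -- the characters at two primes above `p` agree on the units
  have U₁ : ∀ u : (𝓞 F)ˣ, IsSquare (ψ 0 u * ψ 1 u) := by
    refine isSquare_unit_pair hζ (ψ 0) (ψ 1) hz0 hz1 ?_ ?_
    · convert hm1 using 1; linear_combination hg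
    · convert hm1 using 1
      linear_combination (g ^ 8 - g ^ 6 - g ^ 5 - g ^ 4 + g + 2) * hg
  have U₂ : ∀ u : (𝓞 F)ˣ, IsSquare (ψ 0 u * ψ 2 u) := by
    refine isSquare_unit_pair hζ (ψ 0) (ψ 2) hz0 hz2 ?_ ?_
    · exact ⟨g ^ 3, by linear_combination -g ^ 2 * hg⟩
    · convert hm1 using 1
      linear_combination (-g ^ 2 + 2) * hg
  have hu0 : ∀ (i : Fin 4) (u : (𝓞 F)ˣ), ψ i u ≠ 0 := fun i u => (u.isUnit.map (ψ i)).ne_zero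
  -- The product of the characters at the primes for `g` and `g³` kills units, integers and `x₂`
  -- (as `√-2` has the same residue at both), but not `x₁`, whose residues multiply to `q₁`.
  have N₁ : ∀ (u : (𝓞 F)ˣ) (e e' : ℕ),
      ¬ ∀ i, IsSquare (ψ i (u * (x₁ * x₂ ^ e * (q₂ : 𝓞 F) ^ e'))) := by
    intro u e e' h
    have h1 := (h 0).mul (h 1)
    have v₁ : ψ 0 x₁ * ψ 1 x₁ = q₁ := by
      rw [hx₁, ← e₁]
      simp only [map_add, map_mul, map_pow, map_intCast, hz0, hz1]
      push_cast
      linear_combination ((a₁ : ZMod p) * b₁ * g ^ 2 + b₁ ^ 2 * (g ^ 4 - 1)) * hg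
    have v₂ : ψ 1 x₂ = ψ 0 x₂ := by
      rw [hx₂]
      simp only [map_add, map_mul, map_pow, map_intCast, hz0, hz1]
      linear_combination (b₂ : ZMod p) * (g ^ 5 - g) * hg
    have key : ψ 0 (u * (x₁ * x₂ ^ e * (q₂ : 𝓞 F) ^ e')) *
        ψ 1 (u * (x₁ * x₂ ^ e * (q₂ : 𝓞 F) ^ e')) =
        (ψ 0 u * ψ 1 u) * (q₁ * (ψ 0 x₂ ^ e * ψ 0 x₂ ^ e) *
          ((q₂ : ZMod p) ^ e' * (q₂ : ZMod p) ^ e')) := by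
      rw [← v₁]
      simp only [map_mul, map_pow, map_intCast, v₂]
      ring
    rw [key] at h1
    exact not_isSquare_mul₃ (U₁ u) (mul_ne_zero (hu0 _ _) (hu0 _ _)) r₁ ⟨_, rfl⟩
      (mul_ne_zero (pow_ne_zero _ (y₂ 0)) (pow_ne_zero _ (y₂ 0))) ⟨_, rfl⟩
      (mul_ne_zero (pow_ne_zero _ q₂0) (pow_ne_zero _ q₂0)) h1
  -- The product of the characters at the primes for `g` and `-g` kills units and integers, but not
  -- `x₂`, whose residues multiply to `q₂`.
  have N₂ : ∀ (u : (𝓞 F)ˣ) (e' : ℕ), ¬ ∀ i, IsSquare (ψ i (u * (x₂ * (q₂ : 𝓞 F) ^ e'))) := by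
    intro u e' h
    have h1 := (h 0).mul (h 2)
    have v₂ : ψ 0 x₂ * ψ 2 x₂ = q₂ := by
      rw [hx₂, ← e₂]
      simp only [map_add, map_mul, map_pow, map_intCast, hz0, hz2]
      push_cast
      linear_combination (b₂ : ZMod p) ^ 2 * (-g ^ 2 - 2) * hg
    have key : ψ 0 (u * (x₂ * (q₂ : 𝓞 F) ^ e')) * ψ 2 (u * (x₂ * (q₂ : 𝓞 F) ^ e')) =
        (ψ 0 u * ψ 2 u) * (q₂ * ((q₂ : ZMod p) ^ e' * (q₂ : ZMod p) ^ e') * 1) := by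
      simp only [map_mul, map_pow, map_intCast]
      linear_combination (ψ 0 u * ψ 2 u) * ((q₂ : ZMod p) ^ e' * (q₂ : ZMod p) ^ e') * v₂
    rw [key] at h1
    exact not_isSquare_mul₃ (U₂ u) (mul_ne_zero (hu0 _ _) (hu0 _ _)) r₂ ⟨_, rfl⟩
      (mul_ne_zero (pow_ne_zero _ q₂0) (pow_ne_zero _ q₂0)) IsSquare.one one_ne_zero h1
  have zmod2 : ∀ e : ZMod 2, e = 0 ∨ e = 1 := by decide
  have val1 : (1 : ZMod 2).val = 1 := rfl
  refine ⟨?_, ?_, ?_, ?_⟩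
  · refine D.two_pow_le_card ![x₁, x₂] ?_ ?_ ?_
    · intro i; fin_cases i
      · exact n₁0
      · exact n₂0
    · intro i; fin_cases i
      · exact I₁
      · exact I₂
    · intro v hv u α δ hδ h
      have h' := fun i => hsq i hδ h
      simp only [Fin.prod_univ_two, Matrix.cons_val_zero, Matrix.cons_val_one] at h'
      rcases zmod2 (v 0) with h0 | h0
      · rcases zmod2 (v 1) with h1 | h1
        · exact hv (by ext i; fin_cases i <;> simp [h0, h1])
        · refine N₂ u 0 ?_
          simpa [h0, h1, val1] using h'
      · refine N₁ u (v 1).val 0 ?_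
        simpa [h0, val1] using h'
  · rw [hcard]
    have := T.card_le ⊤ (fun _ _ _ => Subgroup.mem_top _) h8 h4
    simpa using this
  · intro hn
    rw [hcard]
    -- a unit that is a norm from `K` is a square modulo the prime `ψ 0`
    have h1 := T.card_le (sqUnits (ψ 0)) (by
      rintro I u ⟨α, δ, -, hδ, -, h⟩
      exact hsq 0 hδ h) h8 h4
    have h2 : (sqUnits (ψ 0)).index ∣ 4 := by
      rw [← h4]
      refine Subgroup.index_dvd_of_le ?_
      rintro _ ⟨w, rfl⟩
      change IsSquare (ψ 0 ((w ^ 2 : (𝓞 F)ˣ) : 𝓞 F))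
      rw [Units.val_pow_eq_pow_val, map_pow]
      exact IsSquare.sq _
    have h3 : (sqUnits (ψ 0)).index ≠ 1 := by
      intro h
      rw [Subgroup.index_eq_one] at h
      have hall : ∀ u : (𝓞 F)ˣ, IsSquare (ψ 0 u) := by
        intro u
        have : u ∈ sqUnits (ψ 0) := by rw [h]; exact Subgroup.mem_top _
        exact this
      refine hn ⟨?_, ?_⟩
      · rw [← hz0]; exact hall (zu hζ)
      · have := hall (eu hζ)
        have e : ψ 0 (eu hζ : 𝓞 F) = 1 + g - g ^ 3 := by rw [← hz0]; simp [eu, hz]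
        rwa [e] at this
    have h5 : (sqUnits (ψ 0)).index ≠ 0 := by
      intro h; rw [h] at h2; simp at h2
    have h6 : 2 ≤ (sqUnits (ψ 0)).index := by omega
    nlinarith
  · rintro ⟨hg1, hg2⟩
    refine D.two_pow_le_card (n := 3) ![x₁, x₂, q₂] ?_ ?_ ?_
    · intro i; fin_cases i
      · exact n₁0
      · exact n₂0
      · exact n₃0
    · intro i; fin_cases i
      · exact I₁
      · exact I₂
      · exact I₃
    · intro v hv u α δ hδ h
      have h' := fun i => hsq i hδ h
      simp only [Fin.prod_univ_three, Matrix.cons_val] at h'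
      rcases zmod2 (v 0) with h0 | h0
      · rcases zmod2 (v 1) with h1 | h1
        · rcases zmod2 (v 2) with h2 | h2
          · exact hv (by ext i; fin_cases i <;> simp [h0, h1, h2])
          · have h3 := h' 0
            simp only [h0, h1, h2, val1, ZMod.val_zero, pow_zero, one_mul, pow_one, map_mul,
              map_intCast] at h3
            have hu : IsSquare (ψ 0 u) := by
              refine isSquare_unit hζ (ψ 0 : 𝓞 F →* ZMod p) ?_ ?_ u
              · simpa [hz0, ← hz] using hg1
              · simpa [hz0, ← hz] using hg2
            rw [isSquare_mul_iff_of_isSquare hu (hu0 _ _)] at h3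
            exact r₂ h3
        · refine N₂ u (v 2).val ?_
          simpa [h0, h1, val1] using h'
      · refine N₁ u (v 1).val (v 2).val ?_
        simpa [h0, val1] using h'

end Count

/-! ### The quadratic extension `k* / ℚ(ζ₈)` -/

section Inst
variable {F K : Type*} [Field F] [NumberField F] [IsCyclotomicExtension {2 ^ (2 + 1)} ℚ F]
  [Field K] [NumberField K] [Algebra F K] {ζ : F} {p : ℕ} [Fact p.Prime]

/-- `√p` is not in `ℚ(ζ₈)`: as `(p)` is radical in `ℤ[ζ₈]`, a square root of `p` would be divisible
by `p`. -/
theorem sqrt_not_mem (hζ : IsPrimitiveRoot ζ (2 ^ (2 + 1))) {g : ZMod p} (hp8 : p % 8 = 1)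
    (hg : g ^ 4 = -1) (x : F) : x * x ≠ p := by
  intro hx
  have hint : IsIntegral ℤ x := by
    refine ⟨Polynomial.X ^ 2 - Polynomial.C (p : ℤ), by monicity!, ?_⟩
    simp [sq, hx]
  set y : 𝓞 F := ⟨x, hint⟩ with hy
  have hyy : y * y = p := by
    apply RingOfIntegers.ext
    change x * x = ((p : 𝓞 F) : F)
    rw [hx]; simp
  have hG4 : ∀ i, (![g, g ^ 3, -g, -g ^ 3] : Fin 4 → ZMod p) i ^ 4 = -1 := by
    intro i
    fin_cases i
    · exact hg
    · change (g ^ 3) ^ 4 = -1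
      linear_combination (g ^ 8 - g ^ 4 + 1) * hg
    · change (-g) ^ 4 = -1
      linear_combination hg
    · change (-g ^ 3) ^ 4 = -1
      linear_combination (g ^ 8 - g ^ 4 + 1) * hg
  choose ψ hψ using fun i => exists_eight_hom hζ _ (hG4 i)
  obtain ⟨c, hc⟩ := dvd_of_dvd_sq (eight_exists_poly hζ) (roots_injective hp8 hg) hψ
    (f := y) (Dvd.intro 1 (by rw [hyy, mul_one]))
  have hp0 : (p : 𝓞 F) ≠ 0 := Nat.cast_ne_zero.2 (Fact.out : p.Prime).ne_zero
  have h1 : (p : 𝓞 F) * (c * c) = 1 := by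
    apply mul_left_cancel₀ hp0
    rw [mul_one]
    nth_rw 3 [← hyy]
    rw [hc]; ring
  have := congrArg (ψ 0) h1
  simp at this

/-- The rings of integers in `K = F(√p)`. The condition `p ≡ 1 (mod 4)` makes `(1 + √p)/2`
integral. -/
theorem exists_quadSetup (hp4 : p % 4 = 1) (h2 : Module.finrank F K = 2) {r : K} (hr : r * r = p)
    (hrF : ∀ x : F, x * x ≠ p) :
    ∃ D : QuadSetup (𝓞 F) (𝓞 K), D.s * D.s = algebraMap (𝓞 F) (𝓞 K) p := by
  have hfd : FiniteDimensional F K := Module.finite_of_finrank_pos (by omega)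
  have hq : Algebra.IsQuadraticExtension F K := ⟨h2⟩
  have hgal : IsGalois F K := inferInstance
  have hcard : Nat.card (K ≃ₐ[F] K) = 2 := by rw [IsGalois.card_aut_eq_finrank, h2]
  have hr' : ¬ ∀ f : K ≃ₐ[F] K, f r = r := by
    rw [← IsGalois.mem_range_algebraMap_iff_fixed]
    rintro ⟨x, rfl⟩
    refine hrF x ?_
    apply (algebraMap F K).injective
    rw [map_mul, hr, map_natCast]
  push Not at hr'
  obtain ⟨τ, hτ⟩ := hr'
  have hτr : τ r = - r := by
    have : τ r * τ r = r * r := by rw [← map_mul, hr, map_natCast]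
    exact (mul_self_eq_mul_self_iff.1 this).resolve_left hτ
  have hτ2 : ∀ y, τ (τ y) = y := by
    intro y
    have : τ ^ 2 = 1 := by rw [← hcard]; exact pow_card_eq_one'
    have := DFunLike.congr_fun this y
    rwa [sq] at this
  have hτ1 : τ ≠ 1 := by rintro rfl; exact hτ rfl
  have hall : ∀ f : K ≃ₐ[F] K, f = 1 ∨ f = τ := by
    intro f
    obtain ⟨a, b, hab, hu⟩ := Nat.card_eq_two_iff.1 hcard
    have key : ∀ z : K ≃ₐ[F] K, z = a ∨ z = b := fun z => by
      have : z ∈ ({a, b} : Set (K ≃ₐ[F] K)) := by rw [hu]; trivial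
      simpa using this
    rcases key f with h | h <;> rcases key 1 with h' | h' <;> rcases key τ with h'' | h'' <;>
      subst h <;> simp_all
  have hir : IsIntegral ℤ r := by
    refine ⟨Polynomial.X ^ 2 - Polynomial.C (p : ℤ), by monicity!, ?_⟩
    simp [sq, hr]
  have hK2 : (2 : K) ≠ 0 := two_ne_zero
  have hio : IsIntegral ℤ ((1 + r) / 2) := by
    obtain ⟨m, hm⟩ : ∃ m : ℕ, p = 4 * m + 1 := ⟨p / 4, by omega⟩
    refine ⟨Polynomial.X ^ 2 - Polynomial.X - Polynomial.C (m : ℤ), by monicity!, ?_⟩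
    have hm' : (p : K) = 4 * m + 1 := by rw [hm]; push_cast; ring
    simp only [Polynomial.eval₂_sub, Polynomial.eval₂_X_pow, Polynomial.eval₂_X,
      Polynomial.eval₂_natCast, eq_intCast, Int.cast_natCast]
    field_simp
    linear_combination hr + hm'
  have ext' : ∀ {a b : 𝓞 K}, (a : K) = b → a = b := fun h => RingOfIntegers.ext h
  refine ⟨{ τ := RingOfIntegers.mapAlgEquiv τ
            invol := fun y => ext' (hτ2 y)
            fixed := ?_
            s := ⟨r, hir⟩
            ω := ⟨(1 + r) / 2, hio⟩
            τ_s := ext' hτr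
            s_ne := ?_
            ω_sub := ext' ?_ }, ext' ?_⟩
  · intro y hy
    have hy' : τ y = y := congrArg (fun z : 𝓞 K => (z : K)) hy
    obtain ⟨x, hx⟩ := (IsGalois.mem_range_algebraMap_iff_fixed (F := F) (y : K)).2 (by
      intro f
      rcases hall f with rfl | rfl
      · rfl
      · exact hy')
    have hxi : IsIntegral ℤ x := by
      have : IsIntegral ℤ (algebraMap F K x) := by rw [hx]; exact y.2
      exact (isIntegral_algebraMap_iff (algebraMap F K).injective).1 this
    exact ⟨⟨x, hxi⟩, ext' hx⟩
  · intro h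
    have h0 : r = 0 := congrArg (fun z : 𝓞 K => (z : K)) h
    rw [h0, zero_mul] at hr
    exact (Fact.out : p.Prime).ne_zero (by exact_mod_cast hr.symm)
  · change (1 + r) / 2 - τ ((1 + r) / 2) = r
    rw [map_div₀, map_add, map_one, hτr, map_ofNat]
    field_simp
    ring
  · change r * r = algebraMap F K ((p : 𝓞 F) : F)
    simp [hr]

end Inst

/-! ### The field `k*` -/

/-- The primitive eighth root of unity `(1 + i)/√2`. -/
def zeta8 : ℂ := (Real.sqrt 2 : ℂ) * (1 + I) / 2

theorem sqrt_two_mul_self : (Real.sqrt 2 : ℂ) * (Real.sqrt 2 : ℂ) = 2 := by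
  rw [← ofReal_mul, Real.mul_self_sqrt (by norm_num)]; norm_num

theorem zeta8_sq : zeta8 ^ 2 = I := by
  rw [zeta8]
  linear_combination ((1 + I) ^ 2 / 4) * sqrt_two_mul_self + (1 / 2) * I_sq

theorem zeta8_sub : zeta8 - zeta8 ^ 3 = (Real.sqrt 2 : ℂ) := by
  have : zeta8 ^ 3 = zeta8 * I := by rw [← zeta8_sq]; ring
  rw [this, zeta8]
  linear_combination (-(Real.sqrt 2 : ℂ) / 2) * I_sq

theorem zeta8_primitive : IsPrimitiveRoot zeta8 (2 ^ (2 + 1)) := by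
  have : Fact (Nat.Prime 2) := ⟨Nat.prime_two⟩
  have h4 : zeta8 ^ 4 = -1 := by
    rw [show zeta8 ^ 4 = (zeta8 ^ 2) ^ 2 by ring, zeta8_sq, I_sq]
  rw [IsPrimitiveRoot.iff_orderOf]
  refine orderOf_eq_prime_pow ?_ ?_
  · norm_num [h4]
  · rw [show 2 ^ (2 + 1) = 4 * 2 by norm_num, pow_mul, h4]; norm_num

/-- `k* = ℚ(ζ₈)(√p)`. -/
theorem kstar_eq (p : ℕ) :
    kstar p = (ℚ⟮zeta8⟯⟮(Real.sqrt p : ℂ)⟯).restrictScalars ℚ := by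
  refine Eq.trans ?_ (adjoin_adjoin_left ℚ {zeta8} {(Real.sqrt p : ℂ)}).symm
  rw [kstar]
  refine le_antisymm (adjoin_le_iff.2 ?_) (adjoin_le_iff.2 ?_)
  · have hz : zeta8 ∈ adjoin ℚ ({zeta8} ∪ {(Real.sqrt p : ℂ)}) :=
      subset_adjoin _ _ (Or.inl rfl)
    rintro x (rfl | rfl | rfl)
    · rw [← zeta8_sub]; exact sub_mem hz (pow_mem hz 3)
    · exact subset_adjoin _ _ (Or.inr rfl)
    · rw [← zeta8_sq]; exact pow_mem hz 2
  · rintro x (rfl | rfl)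
    · refine div_mem (mul_mem (subset_adjoin _ _ (by simp)) (add_mem (one_mem _)
        (subset_adjoin _ _ (by simp)))) (ofNat_mem _ 2)
    · exact subset_adjoin _ _ (by simp)

/-- Transport along an equality of subfields of `ℂ`, which changes the base field over which `B` is
an intermediate field. -/
theorem card_congr_of_eq {F : IntermediateField ℚ ℂ} {A : IntermediateField ℚ ℂ}
    {B : IntermediateField F ℂ} (h : A = B.restrictScalars ℚ) :
    Nat.card (ClassGroup (𝓞 A) ⧸ (powMonoidHom 2 : ClassGroup (𝓞 A) →* ClassGroup (𝓞 A)).range) =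
      Nat.card (ClassGroup (𝓞 B) ⧸
        (powMonoidHom 2 : ClassGroup (𝓞 B) →* ClassGroup (𝓞 B)).range) := by
  subst h; rfl

instance : IsCyclotomicExtension {2 ^ (2 + 1)} ℚ ℚ⟮zeta8⟯ := by
  have h := zeta8_primitive.adjoin_isCyclotomicExtension ℚ
  have hi : IsAlgebraic ℚ zeta8 := (zeta8_primitive.isIntegral (by norm_num)).tower_top.isAlgebraic
  change IsCyclotomicExtension {2 ^ (2 + 1)} ℚ ℚ⟮zeta8⟯.toSubalgebra
  rwa [adjoin_simple_toSubalgebra_of_isAlgebraic hi]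

instance : NumberField ℚ⟮zeta8⟯ := IsCyclotomicExtension.numberField {2 ^ (2 + 1)} ℚ _

theorem gen_primitive : IsPrimitiveRoot (AdjoinSimple.gen ℚ zeta8) (2 ^ (2 + 1)) :=
  IsPrimitiveRoot.of_map_of_injective (f := algebraMap ℚ⟮zeta8⟯ ℂ)
    (by simpa using zeta8_primitive) (algebraMap ℚ⟮zeta8⟯ ℂ).injective

theorem statement_16 (p : ℕ) (hp : p.Prime) (hp8 : p % 8 = 1) :
    (Nat.card (clModSq p) = 2 ^ 2 ∨ Nat.card (clModSq p) = 2 ^ 3) ∧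
    (Nat.card (clModSq p) = 2 ^ 3 ↔
      ((2 : ZMod p) ^ ((p - 1) / 4) = 1 ∧ (-1 : ℤ) ^ ((p - 1) / 8) = 1)) := by
  have : Fact p.Prime := ⟨hp⟩
  obtain ⟨g, hg⟩ := exists_pow_four_eq_neg_one (p := p) hp8
  rw [biquadratic_iff hp8 hg]
  have hsqrt : (Real.sqrt p : ℂ) * (Real.sqrt p : ℂ) = p := by
    rw [← ofReal_mul, Real.mul_self_sqrt (by positivity)]; norm_num
  have hnot := sqrt_not_mem gen_primitive hp8 hg
  set L := ℚ⟮zeta8⟯⟮(Real.sqrt p : ℂ)⟯ with hL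
  have hint : IsIntegral ℚ⟮zeta8⟯ (Real.sqrt p : ℂ) := by
    refine ⟨Polynomial.X ^ 2 - Polynomial.C (p : ℚ⟮zeta8⟯), by monicity!, ?_⟩
    simp [sq, hsqrt]
  have hfd : FiniteDimensional ℚ⟮zeta8⟯ L := adjoin.finiteDimensional hint
  have h2 : Module.finrank ℚ⟮zeta8⟯ L = 2 := by
    rw [hL, adjoin.finrank hint]
    refine le_antisymm ?_ ?_
    · have hm : (Polynomial.X ^ 2 - Polynomial.C (p : ℚ⟮zeta8⟯)).Monic := by monicity!
      have h := Polynomial.natDegree_le_natDegree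
        (minpoly.min ℚ⟮zeta8⟯ (Real.sqrt p : ℂ) hm (by simp [sq, hsqrt]))
      rwa [Polynomial.natDegree_X_pow_sub_C] at h
    · rw [minpoly.two_le_natDegree_iff hint]
      rintro ⟨x, hx⟩
      refine hnot x ?_
      apply (algebraMap ℚ⟮zeta8⟯ ℂ).injective
      rw [map_mul, hx, hsqrt, map_natCast]
  have hNF : NumberField L :=
    { to_charZero := inferInstance
      to_finiteDimensional := FiniteDimensional.trans ℚ ℚ⟮zeta8⟯ L }
  have h8 : Module.finrank ℚ L = 8 := by
    rw [← Module.finrank_mul_finrank ℚ ℚ⟮zeta8⟯ L, h2, eight_finrank]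
  obtain ⟨D, hs⟩ := exists_quadSetup (F := ℚ⟮zeta8⟯) (K := L) (p := p) (by omega) h2
    (r := AdjoinSimple.gen _ (Real.sqrt p : ℂ)) (Subtype.ext hsqrt) hnot
  have main := card_class_mod_sq gen_primitive D h8 hs hp8 hg
  have hcl : Nat.card (clModSq p) = Nat.card (ClassGroup (𝓞 L) ⧸
      (powMonoidHom 2 : ClassGroup (𝓞 L) →* ClassGroup (𝓞 L)).range) := by
    exact card_congr_of_eq (kstar_eq p)
  rw [← hcl] at main
  generalize Nat.card (clModSq p) = N at main
  obtain ⟨m1, m2, m3, m4⟩ := main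
  by_cases h : IsSquare g ∧ IsSquare (1 + g - g ^ 3)
  · have := m4 h
    exact ⟨Or.inr (by omega), iff_of_true (by omega) h⟩
  · have := m3 h
    exact ⟨Or.inl (by omega), iff_of_false (by omega) h⟩
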